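/- arXiv:math/0610290 — 6 statements merged into one kernel-verified Lean document; each statement's English description precedes it below -/
import Mathlib

section
/- Let G be a finite group acting by automorphisms on a finitely generated abelian group M, and let H₁,…,H_r and H'₁,…,H'_s be subgroups of G such that the complex permutation representations ⊕ᵢ ℂ[G/Hᵢ] and ⊕ⱼ ℂ[G/H'ⱼ] are isomorphic as representations of G. Then Σᵢ rank(M^{Hᵢ}) = Σⱼ rank(M^{H'ⱼ}), where M^{H} is the subgroup of elements fixed by H and rank denotes the rank of a finitely generated abelian group (the ℤ-rank of the free part). -/
/-- The subgroup of elements of `M` fixed by every element of the subgroup `H`,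
viewed as a `ℤ`-submodule of the abelian group `M` on which `G` acts by automorphisms. -/
def fixedPoints' {G M : Type} [Group G] [AddCommGroup M] [DistribMulAction G M]
    (H : Subgroup G) : Submodule ℤ M where
  carrier := {m | ∀ h ∈ H, h • m = m}
  add_mem' := by
    intro a b ha hb h hh
    rw [smul_add, ha h hh, hb h hh]
  zero_mem' := by
    intro h hh
    rw [smul_zero]
  smul_mem' := by
    intro n m hm h hh
    have h2 := AddMonoidHom.map_zsmul (DistribSMul.toAddMonoidHom M h) n m
    simp only [DistribSMul.toAddMonoidHom_apply] at h2
    rw [h2, hm h hh]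

open TensorProduct

namespace Representation

section Permutation

variable {k G V ι : Type*} [CommRing k] [Group G] [AddCommGroup V] [Module k V]

/-- The map sending a `G`-equivariant map from `⊕ᵢ k[G/Hᵢ]` to `V` to the images of the trivial
cosets. -/
noncomputable def evalTrivialCosets (σ : Representation k G V) (H : ι → Subgroup G) :
    (ofMulAction k G (Σ i, G ⧸ H i)).IntertwiningMap σ →ₗ[k]
      Π i, invariants (σ.comp (H i).subtype) where
  toFun f i := ⟨f (.single ⟨i, (1 : G)⟩ 1), fun h ↦ by
    have hfix : (h : G) • (⟨i, (1 : G)⟩ : Σ i, G ⧸ H i) = ⟨i, (1 : G)⟩ := by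
      rw [Sigma.smul_mk, MulAction.Quotient.smul_coe]
      congr 1
      rw [QuotientGroup.eq]
      simp
    rw [MonoidHom.comp_apply, Subgroup.subtype_apply, ← f.isIntertwining,
      ofMulAction_single, hfix]⟩
  map_add' _ _ := rfl
  map_smul' _ _ := rfl

theorem evalTrivialCosets_injective (σ : Representation k G V) (H : ι → Subgroup G) :
    Function.Injective (evalTrivialCosets σ H) := by
  intro f f' hff
  have hval (i : ι) : f (.single ⟨i, (1 : G)⟩ 1) = f' (.single ⟨i, (1 : G)⟩ 1) :=
    congrArg Subtype.val (congrFun hff i)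
  ext ⟨i, x⟩
  induction x using QuotientGroup.induction_on with
  | H g =>
    have hg : (⟨i, (g : G ⧸ H i)⟩ : Σ i, G ⧸ H i) = g • ⟨i, (1 : G)⟩ := by
      rw [Sigma.smul_mk, MulAction.Quotient.smul_coe, smul_eq_mul, mul_one]
    have key : f (.single ⟨i, (g : G ⧸ H i)⟩ 1) = f' (.single ⟨i, (g : G ⧸ H i)⟩ 1) := by
      rw [hg, ← ofMulAction_single, f.isIntertwining, f'.isIntertwining, hval]
    simpa using key

theorem evalTrivialCosets_surjective (σ : Representation k G V) (H : ι → Subgroup G) :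
    Function.Surjective (evalTrivialCosets σ H) := by
  intro v
  let F : (Σ i, G ⧸ H i) → V := fun x ↦
    Quotient.liftOn' x.2 (fun g ↦ σ g (v x.1)) fun a b hab ↦ by
      have := (v x.1).2 ⟨a⁻¹ * b, QuotientGroup.leftRel_apply.mp hab⟩
      simp only [MonoidHom.comp_apply, Subgroup.subtype_apply] at this
      rw [← this, ← Module.End.mul_apply, ← map_mul, mul_inv_cancel_left, this]
  have hF_mk (i : ι) (g : G) : F ⟨i, g⟩ = σ g (v i) := rfl
  have hF (g : G) (x : Σ i, G ⧸ H i) : F (g • x) = σ g (F x) := by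
    obtain ⟨i, x⟩ := x
    induction x using QuotientGroup.induction_on with
    | H a =>
      rw [Sigma.smul_mk, MulAction.Quotient.smul_coe, hF_mk, hF_mk, smul_eq_mul, map_mul,
        Module.End.mul_apply]
  refine ⟨⟨Finsupp.linearCombination k F ∘ₗ (MonoidAlgebra.coeffLinearEquiv k).toLinearMap,
    fun g ↦ ?_⟩, ?_⟩
  · ext x
    simp [hF]
  · ext i
    simp [evalTrivialCosets, hF_mk]

/-- Frobenius reciprocity for permutation representations: a `G`-equivariant map from
`⊕ᵢ k[G/Hᵢ]` to `V` is a family of `Hᵢ`-invariant vectors of `V`. -/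
noncomputable def intertwiningMapSigmaQuotientEquiv (σ : Representation k G V)
    (H : ι → Subgroup G) :
    (ofMulAction k G (Σ i, G ⧸ H i)).IntertwiningMap σ ≃ₗ[k]
      Π i, invariants (σ.comp (H i).subtype) :=
  .ofBijective (evalTrivialCosets σ H)
    ⟨evalTrivialCosets_injective σ H, evalTrivialCosets_surjective σ H⟩

/-- Isomorphic permutation representations have the same total dimension of invariants. -/
theorem sum_finrank_invariants_eq_of_equiv {k G V ι κ : Type*} [Field k] [Group G]
    [AddCommGroup V] [Module k V] [FiniteDimensional k V] [Fintype ι] [Fintype κ]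
    (σ : Representation k G V) (H : ι → Subgroup G) (H' : κ → Subgroup G)
    (φ : (ofMulAction k G (Σ i, G ⧸ H i)).Equiv (ofMulAction k G (Σ j, G ⧸ H' j))) :
    ∑ i, Module.finrank k (invariants (σ.comp (H i).subtype)) =
      ∑ j, Module.finrank k (invariants (σ.comp (H' j).subtype)) := by
  let precomp : (ofMulAction k G (Σ i, G ⧸ H i)).IntertwiningMap σ ≃ₗ[k]
      (ofMulAction k G (Σ j, G ⧸ H' j)).IntertwiningMap σ :=
    { toFun f := f.comp φ.symm.toIntertwiningMap
      invFun f := f.comp φ.toIntertwiningMap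
      map_add' _ _ := rfl
      map_smul' _ _ := rfl
      left_inv f := DFunLike.ext _ _ fun v ↦ congrArg f (φ.symm_apply_apply v)
      right_inv f := DFunLike.ext _ _ fun v ↦ congrArg f (φ.apply_symm_apply v) }
  rw [← Module.finrank_pi_fintype, ← Module.finrank_pi_fintype]
  exact ((intertwiningMapSigmaQuotientEquiv σ H).symm ≪≫ₗ precomp ≪≫ₗ
    intertwiningMapSigmaQuotientEquiv σ H').finrank_eq

end Permutation

section BaseChange

variable {R G M : Type*} (S : Type*) [CommRing R] [CommRing S] [Algebra R S] [Group G]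
  [AddCommGroup M] [Module R M]

/-- Extension of scalars of a representation. -/
noncomputable def baseChange (ρ : Representation R G M) : Representation S G (S ⊗[R] M) :=
  (Module.End.baseChangeHom R S M : Module.End R M →* Module.End S (S ⊗[R] M)).comp ρ

theorem baseChange_apply (ρ : Representation R G M) (g : G) :
    ρ.baseChange S g = (ρ g).baseChange S := rfl

/-- For a finite group, the rank of the invariants is unchanged by flat extension of scalars. -/
theorem finrank_invariants_baseChange [Finite G] [NoZeroDivisors S] [FaithfulSMul R S]
    [Module.Flat R S] (ρ : Representation R G M) :
    Module.finrank S (ρ.baseChange S).invariants = Module.finrank R ρ.invariants := by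
  classical
  have := Fintype.ofFinite G
  let d : M →ₗ[R] G → M := LinearMap.pi fun g ↦ ρ g - LinearMap.id
  have hker : LinearMap.ker d = ρ.invariants := by
    ext m
    simp [d, funext_iff, sub_eq_zero]
  have hd (g : G) (x : S ⊗[R] M) :
      TensorProduct.piRight R S S (fun _ : G ↦ M) (AlgebraTensorModule.lTensor S S d x) g =
        ρ.baseChange S g x - x := by
    induction x with
    | zero => simp
    | tmul s m => simp [d, baseChange_apply, tmul_sub]
    | add x y hx hy => simp only [map_add, Pi.add_apply, hx, hy]; abel
  have hker' : LinearMap.ker (AlgebraTensorModule.lTensor S S d) =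
      (ρ.baseChange S).invariants := by
    ext x
    rw [LinearMap.mem_ker, ← (TensorProduct.piRight R S S (fun _ : G ↦ M)).map_eq_zero_iff,
      funext_iff, mem_invariants]
    exact forall_congr' fun g ↦ by rw [hd, Pi.zero_apply, sub_eq_zero]
  rw [← hker, ← hker', ← (LinearMap.tensorKerEquiv S S d).finrank_eq]
  exact (TensorProduct.isBaseChange R (LinearMap.ker d) S).finrank_eq

end BaseChange

end Representation

/-- The fixed points of `H` are the invariants of the associated integral representation. -/
theorem fixedPoints'_eq_invariants {G M : Type} [Group G] [AddCommGroup M] [DistribMulAction G M]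
    (H : Subgroup G) :
    fixedPoints' (M := M) H =
      Representation.invariants ((Representation.ofDistribMulAction ℤ G M).comp H.subtype) := by
  ext m
  exact ⟨fun hm h ↦ hm h h.2, fun hm h hh ↦ hm ⟨h, hh⟩⟩

/-- If `G` is a finite group acting by automorphisms on a finitely generated abelian group `M`
and the complex permutation representations `⊕ᵢ ℂ[G/Hᵢ]` and `⊕ⱼ ℂ[G/H'ⱼ]` are isomorphic,
then `Σᵢ rank M^{Hᵢ} = Σⱼ rank M^{H'ⱼ}`. -/
theorem sum_rank_fixed_eq_of_permRep_iso
    {G : Type} [Group G] [Fintype G]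
    {r s : ℕ} (H : Fin r → Subgroup G) (H' : Fin s → Subgroup G)
    (e : ((Σ i : Fin r, G ⧸ H i) →₀ ℂ) ≃ₗ[ℂ] ((Σ j : Fin s, G ⧸ H' j) →₀ ℂ))
    (he : ∀ (g : G) (v : (Σ i : Fin r, G ⧸ H i) →₀ ℂ),
      e (Representation.ofMulAction ℂ G (Σ i : Fin r, G ⧸ H i) g (MonoidAlgebra.ofCoeff v)).coeff =
        (Representation.ofMulAction ℂ G (Σ j : Fin s, G ⧸ H' j) g (MonoidAlgebra.ofCoeff (e v))).coeff)
    {M : Type} [AddCommGroup M] [Module.Finite ℤ M] [DistribMulAction G M] :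
    ∑ i, Module.finrank ℤ (fixedPoints' (M := M) (H i)) =
      ∑ j, Module.finrank ℤ (fixedPoints' (M := M) (H' j)) := by
  let ρ := Representation.ofDistribMulAction ℤ G M
  have hrank (K : Subgroup G) : Module.finrank ℤ (fixedPoints' (M := M) K) =
      Module.finrank ℂ (Representation.invariants ((ρ.baseChange ℂ).comp K.subtype)) := by
    rw [fixedPoints'_eq_invariants]
    exact (Representation.finrank_invariants_baseChange ℂ (ρ.comp K.subtype)).symm
  simp only [hrank]
  refine Representation.sum_finrank_invariants_eq_of_equiv _ H H' (.mk
    (MonoidAlgebra.coeffLinearEquiv ℂ ≪≫ₗ e ≪≫ₗ (MonoidAlgebra.coeffLinearEquiv ℂ).symm)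
    fun g ↦ LinearMap.ext fun v ↦ ?_)
  exact congrArg MonoidAlgebra.ofCoeff (he g v.coeff)
end

section
/- Let G be a finite group and let H₁,…,H_r and H'₁,…,H'_s be subgroups of G such that the complex permutation representations ⊕ᵢ ℂ[G/Hᵢ] and ⊕ⱼ ℂ[G/H'ⱼ] are isomorphic as representations of G. Let τ be an irreducible finite-dimensional complex representation of G equipped with a G-invariant positive-definite Hermitian inner product; for each subgroup H among the Hᵢ and H'ⱼ fix a basis of τ^{H} and let M_H denote the Gram matrix of the inner product on this basis. Let ρ be a complex representation of G equipped with a G-invariant positive-definite Hermitian inner product ⟨,⟩, together with a G-equivariant isomorphism ψ : ρ → τ^{⊕n}; equip each ρ^{H} with the basis obtained by pulling back through ψ the union, over the n copies of τ, of the chosen basis of τ^{H}. Then ∏ᵢ det((1/|Hᵢ|)⟨,⟩ | ρ^{Hᵢ}) / ∏ⱼ det((1/|H'ⱼ|)⟨,⟩ | ρ^{H'ⱼ}) = ( ∏ᵢ det((1/|Hᵢ|) M_{Hᵢ}) / ∏ⱼ det((1/|H'ⱼ|) M_{H'ⱼ}) )ⁿ, where det(B | W) denotes the determinant of the Gram matrix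 of the form B on the fixed basis of W, with det(B | 0) = 1, and (1/m)B denotes the form B scaled by 1/m. In particular the left-hand side is independent of the choice of ⟨,⟩. -/
/-- The submodule of vectors fixed by every element of a subgroup `H` under a
representation `ρ`. -/
def fixedSubmodule {k G V : Type} [CommRing k] [Group G] [AddCommGroup V] [Module k V]
    (ρ : Representation k G V) (H : Subgroup G) : Submodule k V where
  carrier := {v | ∀ h ∈ H, ρ h v = v}
  add_mem' := by
    intro a b ha hb h hh
    rw [map_add, ha h hh, hb h hh]
  zero_mem' := by
    intro h hh
    rw [map_zero]
  smul_mem' := by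
    intro c v hv h hh
    rw [map_smul, hv h hh]

/-- The linear maps out of the free module on a `G`-set `X` that intertwine the permutation
action with a representation `τ`. -/
def equivariantMaps {k G W : Type} (X : Type) [CommRing k] [Group G] [AddCommGroup W] [Module k W]
    [MulAction G X] (τ : Representation k G W) : Submodule k ((X →₀ k) →ₗ[k] W) where
  carrier := {L | ∀ (g : G) (v : X →₀ k), L (v.mapDomain (g • ·)) = τ g (L v)}
  add_mem' := by
    intro L M hL hM g v
    simp only [LinearMap.add_apply, hL g v, hM g v, map_add]
  zero_mem' := by
    intro g v
    simp
  smul_mem' := by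
    intro c L hL g v
    simp only [LinearMap.smul_apply, hL g v, map_smul]

/-- Precomposition with an equivariant isomorphism of permutation modules. -/
noncomputable def equivariantMapsCongr {k G W X Y : Type} [CommRing k] [Group G] [AddCommGroup W] [Module k W]
    [MulAction G X] [MulAction G Y] (τ : Representation k G W) (e : (X →₀ k) ≃ₗ[k] (Y →₀ k))
    (he : ∀ (g : G) (v : X →₀ k), e (v.mapDomain (g • ·)) = (e v).mapDomain (g • ·)) :
    equivariantMaps Y τ ≃ₗ[k] equivariantMaps X τ where
  toFun L := ⟨L.1 ∘ₗ e.toLinearMap, fun g v => by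
    simp only [LinearMap.comp_apply, LinearEquiv.coe_coe, he, L.2 g (e v)]⟩
  map_add' L M := rfl
  map_smul' c L := rfl
  invFun L := ⟨L.1 ∘ₗ e.symm.toLinearMap, fun g v => by
    have h : e.symm (v.mapDomain (g • ·)) = (e.symm v).mapDomain (g • ·) := by
      rw [LinearEquiv.symm_apply_eq, he, e.apply_symm_apply]
    simp only [LinearMap.comp_apply, LinearEquiv.coe_coe, h, L.2 g (e.symm v)]⟩
  left_inv L := by
    refine Subtype.ext (LinearMap.ext fun v => ?_)
    simp
  right_inv L := by
    refine Subtype.ext (LinearMap.ext fun v => ?_)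
    simp

/-- Frobenius reciprocity: evaluating an equivariant map on the trivial cosets identifies
equivariant maps out of `⊕ᵢ k[G/Hᵢ]` with families of `Hᵢ`-fixed vectors. -/
noncomputable def equivariantMapsEquivFixed {k G W ι : Type} [CommRing k] [Group G]
    [AddCommGroup W] [Module k W] (τ : Representation k G W) (H : ι → Subgroup G) :
    equivariantMaps (Σ i, G ⧸ H i) τ ≃ₗ[k] (∀ i, fixedSubmodule τ (H i)) where
  toFun L i := ⟨L.1 (Finsupp.single ⟨i, ((1 : G) : G ⧸ H i)⟩ 1), fun h hh => by
    rw [← L.2 h, Finsupp.mapDomain_single]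
    congr 2
    refine Sigma.ext rfl (heq_of_eq ?_)
    change ((h * 1 : G) : G ⧸ H i) = ((1 : G) : G ⧸ H i)
    rw [mul_one, QuotientGroup.eq]
    simpa using hh⟩
  map_add' L M := rfl
  map_smul' c L := rfl
  invFun w := ⟨Finsupp.linearCombination k fun x : Σ i, G ⧸ H i => τ x.2.out (w x.1 : W), by
    intro g v
    induction v using Finsupp.induction_linear with
    | zero => simp
    | add u v hu hv => rw [Finsupp.mapDomain_add, map_add, map_add, map_add, hu, hv]
    | single x c =>
      obtain ⟨i, q⟩ := x
      rw [Finsupp.mapDomain_single, Finsupp.linearCombination_single,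
        Finsupp.linearCombination_single, map_smul]
      congr 1
      change τ (g • q).out (w i : W) = τ g (τ q.out (w i : W))
      have hmem : (g * q.out)⁻¹ * (g • q).out ∈ H i := by
        rw [← QuotientGroup.eq, QuotientGroup.out_eq']
        conv_rhs => rw [← QuotientGroup.out_eq' q]
        rfl
      have hfix := (w i).2 _ hmem
      rw [← Module.End.mul_apply, ← map_mul]
      conv_rhs => rw [← hfix]
      rw [← Module.End.mul_apply, ← map_mul, mul_inv_cancel_left]⟩
  left_inv L := by
    ext1
    refine Finsupp.lhom_ext' fun x => LinearMap.ext_ring ?_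
    obtain ⟨i, q⟩ := x
    simp only [LinearMap.comp_apply, Finsupp.lsingle_apply, Finsupp.linearCombination_single,
      one_smul]
    rw [← L.2, Finsupp.mapDomain_single]
    congr 2
    refine Sigma.ext rfl (heq_of_eq ?_)
    change ((q.out * 1 : G) : G ⧸ H i) = q
    rw [mul_one, QuotientGroup.out_eq']
  right_inv w := by
    funext i
    ext1
    simp only [Finsupp.linearCombination_single, one_smul]
    refine (w i).2 _ ?_
    have h := QuotientGroup.eq.1 (QuotientGroup.out_eq' ((1 : G) : G ⧸ H i)).symm
    simpa using h

/-- Isomorphic permutation representations have the same total multiplicity of fixed vectors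
in any finite-dimensional representation. -/
theorem sum_finrank_fixedSubmodule_eq {k G W ι κ : Type} [Field k] [Group G] [Fintype ι]
    [Fintype κ] [AddCommGroup W] [Module k W] [FiniteDimensional k W]
    (τ : Representation k G W) (H : ι → Subgroup G) (H' : κ → Subgroup G)
    (e : ((Σ i, G ⧸ H i) →₀ k) ≃ₗ[k] ((Σ j, G ⧸ H' j) →₀ k))
    (he : ∀ (g : G) (v : (Σ i, G ⧸ H i) →₀ k),
      e (v.mapDomain (g • ·)) = (e v).mapDomain (g • ·)) :
    ∑ i, Module.finrank k (fixedSubmodule τ (H i)) =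
      ∑ j, Module.finrank k (fixedSubmodule τ (H' j)) := by
  rw [← Module.finrank_pi_fintype, ← Module.finrank_pi_fintype]
  exact ((equivariantMapsEquivFixed τ H).symm ≪≫ₗ (equivariantMapsCongr τ e he).symm ≪≫ₗ
    equivariantMapsEquivFixed τ H').finrank_eq

/-- Schur's lemma for sesquilinear forms: on an irreducible representation, every invariant
sesquilinear form is a scalar multiple of a given anisotropic one. -/
theorem exists_eq_smul_of_invariant_sesquilinear {G W : Type} [Group G]
    [AddCommGroup W] [Module ℂ W] [FiniteDimensional ℂ W] [Nontrivial W]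
    (τ : Representation ℂ G W)
    (hτirr : ∀ U : Submodule ℂ W, (∀ g : G, ∀ w ∈ U, τ g w ∈ U) → U = ⊥ ∨ U = ⊤)
    (B C : W →ₗ⋆[ℂ] W →ₗ[ℂ] ℂ)
    (hBinv : ∀ (g : G) (v w : W), B (τ g v) (τ g w) = B v w)
    (hBaniso : ∀ v : W, B v v = 0 → v = 0)
    (hCinv : ∀ (g : G) (v w : W), C (τ g v) (τ g w) = C v w) :
    ∃ μ : ℂ, ∀ v w : W, C v w = μ * B v w := by
  let u := Module.finBasis ℂ W
  let F : W →ₗ[ℂ] (Fin (Module.finrank ℂ W) → ℂ) := LinearMap.pi fun i => B (u i)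
  let E : W →ₗ[ℂ] (Fin (Module.finrank ℂ W) → ℂ) := LinearMap.pi fun i => C (u i)
  have hFinj : Function.Injective F := by
    rw [injective_iff_map_eq_zero]
    intro w hw
    have h0 : B.flip w = 0 := u.ext fun i => congrFun hw i
    exact hBaniso w (LinearMap.congr_fun h0 w)
  let F' : W ≃ₗ[ℂ] (Fin (Module.finrank ℂ W) → ℂ) :=
    LinearMap.linearEquivOfInjective F hFinj (by simp)
  obtain ⟨μ, hμ⟩ := Module.End.exists_eigenvalue (F'.symm.toLinearMap ∘ₗ E : Module.End ℂ W)
  obtain ⟨w₀, hw₀⟩ := hμ.exists_hasEigenvector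
  have hE : E w₀ = μ • F w₀ := by
    have h := hw₀.apply_eq_smul
    have h' := congrArg F' h
    simpa [F'] using h'
  let U : Submodule ℂ W := LinearMap.ker (C.flip - μ • B.flip)
  have hU : ∀ w, w ∈ U ↔ ∀ v, C v w = μ * B v w := by
    intro w
    simp only [U, LinearMap.mem_ker, LinearMap.ext_iff]
    simp [sub_eq_zero]
  have hw₀U : w₀ ∈ U := by
    refine LinearMap.mem_ker.2 (u.ext fun i => ?_)
    have h := congrFun hE i
    simpa [E, F, sub_eq_zero] using h
  have hinv : ∀ g : G, ∀ w ∈ U, τ g w ∈ U := by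
    intro g w hw
    rw [hU] at hw ⊢
    intro v
    have hv : τ g (τ g⁻¹ v) = v := by
      rw [← Module.End.mul_apply, ← map_mul, mul_inv_cancel, map_one, Module.End.one_apply]
    rw [← hv, hCinv, hBinv, hw]
  have htop : U = ⊤ := (hτirr U hinv).resolve_left fun h => hw₀.2 (by simpa [h] using hw₀U)
  exact ⟨μ, fun v w => (hU w).1 (htop ▸ Submodule.mem_top) v⟩

/-- A form that, block by block, is a matrix `A` times a fixed form has invertible `A` as soon
as it is anisotropic. -/
theorem det_ne_zero_of_anisotropic_blocks {W : Type} [AddCommGroup W] [Module ℂ W] [Nontrivial W]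
    {n : ℕ} (B : (Fin n → W) →ₗ⋆[ℂ] (Fin n → W) →ₗ[ℂ] ℂ) (Bτ : W →ₗ⋆[ℂ] W →ₗ[ℂ] ℂ)
    (hB : ∀ v, B v v = 0 → v = 0) (A : Matrix (Fin n) (Fin n) ℂ)
    (hA : ∀ k l v w, B (Pi.single k v) (Pi.single l w) = A k l * Bτ v w) : A.det ≠ 0 := by
  intro hdet
  obtain ⟨c, hc, hAc⟩ := Matrix.exists_mulVec_eq_zero_iff.2 hdet
  obtain ⟨w, hw⟩ := exists_ne (0 : W)
  let x : Fin n → W := fun l => c l • w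
  have hx : x = ∑ l, c l • Pi.single l w := by
    rw [← Finset.univ_sum_single x]
    exact Finset.sum_congr rfl fun l _ => Pi.single_smul (f := fun _ => W) l (c l) w
  have hk : ∀ k v, B (Pi.single k v) x = 0 := by
    intro k v
    have h := congrFun hAc k
    simp only [Matrix.mulVec, dotProduct, Pi.zero_apply] at h
    rw [hx, map_sum]
    simp only [map_smul, hA, smul_eq_mul]
    calc ∑ l, c l * (A k l * Bτ v w) = (∑ l, A k l * c l) * Bτ v w := by
          rw [Finset.sum_mul]
          exact Finset.sum_congr rfl fun l _ => by ring
      _ = 0 := by rw [h, zero_mul]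
  have hxx : B x x = 0 := by
    have h : B (∑ k, Pi.single k (x k)) x = 0 := by
      rw [map_sum, LinearMap.sum_apply]
      exact Finset.sum_eq_zero fun k _ => hk k (x k)
    rwa [Finset.univ_sum_single] at h
  obtain ⟨l, hl⟩ := Function.ne_iff.1 hc
  exact (smul_ne_zero hl hw) (congrFun (hB x hxx) l)

/-- Lemma 2.7 of the paper: given a relation `⊕ᵢ ℂ[G/Hᵢ] ≅ ⊕ⱼ ℂ[G/H'ⱼ]` of permutation
representations, an irreducible complex representation `τ` with a `G`-invariant Hermitian
inner product `Bτ`, chosen bases of the fixed spaces `τ^H` with Gram matrices `M_H`, and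
`ρ ≅ τ^{⊕n}` carrying a `G`-invariant Hermitian inner product `B`, the quotient of the Gram
determinants of the scaled forms `(1/|Hᵢ|)B` on `ρ^{Hᵢ}` (with respect to the bases induced
from those of `τ^{Hᵢ}` through the isomorphism `ψ`) equals the `n`-th power of the
corresponding quotient formed from the matrices `(1/|H|)M_H`. -/
theorem gram_det_quotient_of_isotypic
    {G : Type} [Group G] [Fintype G]
    {r s : ℕ} (H : Fin r → Subgroup G) (H' : Fin s → Subgroup G)
    -- the relation between permutation representations
    (e : ((Σ i : Fin r, G ⧸ H i) →₀ ℂ) ≃ₗ[ℂ] ((Σ j : Fin s, G ⧸ H' j) →₀ ℂ))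
    (he : ∀ (g : G) (v : (Σ i : Fin r, G ⧸ H i) →₀ ℂ),
      e (Representation.ofMulAction ℂ G (Σ i : Fin r, G ⧸ H i) g (MonoidAlgebra.ofCoeff v)).coeff =
        (Representation.ofMulAction ℂ G (Σ j : Fin s, G ⧸ H' j) g (MonoidAlgebra.ofCoeff (e v))).coeff)
    -- the irreducible representation τ with a G-invariant Hermitian inner product
    {W : Type} [AddCommGroup W] [Module ℂ W] [FiniteDimensional ℂ W] [Nontrivial W]
    (τ : Representation ℂ G W)
    (hτirr : ∀ U : Submodule ℂ W, (∀ g : G, ∀ w ∈ U, τ g w ∈ U) → U = ⊥ ∨ U = ⊤)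
    (Bτ : W →ₗ⋆[ℂ] W →ₗ[ℂ] ℂ)
    (hBτinv : ∀ (g : G) (v w : W), Bτ (τ g v) (τ g w) = Bτ v w)
    (hBτherm : ∀ v w : W, Bτ v w = starRingEnd ℂ (Bτ w v))
    (hBτpos : ∀ v : W, v ≠ 0 → 0 < (Bτ v v).re)
    -- chosen bases of the fixed subspaces τ^H
    (d : Fin r → ℕ) (d' : Fin s → ℕ)
    (b : ∀ i, Module.Basis (Fin (d i)) ℂ (fixedSubmodule τ (H i)))
    (b' : ∀ j, Module.Basis (Fin (d' j)) ℂ (fixedSubmodule τ (H' j)))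
    -- the representation ρ ≅ τ^{⊕n} with a G-invariant Hermitian inner product
    {V : Type} [AddCommGroup V] [Module ℂ V]
    (ρ : Representation ℂ G V)
    (B : V →ₗ⋆[ℂ] V →ₗ[ℂ] ℂ)
    (hBinv : ∀ (g : G) (v w : V), B (ρ g v) (ρ g w) = B v w)
    (hBherm : ∀ v w : V, B v w = starRingEnd ℂ (B w v))
    (hBpos : ∀ v : V, v ≠ 0 → 0 < (B v v).re)
    (n : ℕ) (ψ : V ≃ₗ[ℂ] (Fin n → W))
    (hψ : ∀ (g : G) (v : V), ψ (ρ g v) = fun k => τ g (ψ v k)) :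
    (∏ i, (Matrix.of fun x y : Fin n × Fin (d i) =>
        ((Nat.card (H i) : ℂ))⁻¹ *
          B (ψ.symm (Pi.single x.1 (b i x.2 : W))) (ψ.symm (Pi.single y.1 (b i y.2 : W)))).det) /
      (∏ j, (Matrix.of fun x y : Fin n × Fin (d' j) =>
        ((Nat.card (H' j) : ℂ))⁻¹ *
          B (ψ.symm (Pi.single x.1 (b' j x.2 : W)))
            (ψ.symm (Pi.single y.1 (b' j y.2 : W)))).det) =
    ((∏ i, (Matrix.of fun a c : Fin (d i) =>
        ((Nat.card (H i) : ℂ))⁻¹ * Bτ (b i a : W) (b i c : W)).det) /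
      (∏ j, (Matrix.of fun a c : Fin (d' j) =>
        ((Nat.card (H' j) : ℂ))⁻¹ * Bτ (b' j a : W) (b' j c : W)).det)) ^ n := by
  have hsum : ∑ i, d i = ∑ j, d' j := by
    have h := sum_finrank_fixedSubmodule_eq τ H H' e fun g v => by
      have h := he g v
      rwa [Representation.ofMulAction_def, Representation.ofMulAction_def] at h
    simpa only [Module.finrank_eq_card_basis (b _), Module.finrank_eq_card_basis (b' _),
      Fintype.card_fin] using h
  let B₁ : (Fin n → W) →ₗ⋆[ℂ] (Fin n → W) →ₗ[ℂ] ℂ :=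
    (B.comp ψ.symm.toLinearMap).compl₂ ψ.symm.toLinearMap
  have hB₁ : ∀ x y, B₁ x y = B (ψ.symm x) (ψ.symm y) := fun x y => rfl
  have hsingle : ∀ g k v, ψ.symm (Pi.single k (τ g v)) = ρ g (ψ.symm (Pi.single k v)) := by
    intro g k v
    rw [LinearEquiv.symm_apply_eq, hψ, LinearEquiv.apply_symm_apply]
    funext l
    exact (Pi.apply_single (fun _ => τ g) (fun _ => map_zero _) k v l).symm
  have hschur : ∀ k l, ∃ μ : ℂ, ∀ v w : W,
      B₁ (Pi.single k v) (Pi.single l w) = μ * Bτ v w := by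
    intro k l
    refine exists_eq_smul_of_invariant_sesquilinear τ hτirr Bτ
      ((B₁.comp (LinearMap.single ℂ (fun _ => W) k)).compl₂ (LinearMap.single ℂ (fun _ => W) l))
      hBτinv ?_ ?_
    · intro v hv
      by_contra hne
      simpa [hv] using hBτpos v hne
    · intro g v w
      change B (ψ.symm (Pi.single k (τ g v))) (ψ.symm (Pi.single l (τ g w))) = _
      rw [hsingle, hsingle, hBinv]
      rfl
  choose A hA using hschur
  have hdet : (Matrix.of A).det ≠ 0 := by
    refine det_ne_zero_of_anisotropic_blocks B₁ Bτ ?_ (Matrix.of A) hA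
    intro v hv
    by_contra hne
    have h := hBpos (ψ.symm v) (by simpa using hne)
    rw [← hB₁, hv] at h
    simp at h
  have hkron : ∀ (m : ℕ) (c : ℂ) (u : Fin m → W),
      (Matrix.of fun x y : Fin n × Fin m =>
        c * B (ψ.symm (Pi.single x.1 (u x.2))) (ψ.symm (Pi.single y.1 (u y.2)))).det =
      (Matrix.of A).det ^ m * (Matrix.of fun a a' : Fin m => c * Bτ (u a) (u a')).det ^ n := by
    intro m c u
    have h := Matrix.det_kronecker (Matrix.of A) (Matrix.of fun a a' => c * Bτ (u a) (u a'))
    rw [Fintype.card_fin, Fintype.card_fin] at h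
    rw [← h]
    congr 1
    ext x y
    simp only [Matrix.of_apply, Matrix.kroneckerMap_apply]
    rw [← hB₁, hA]
    ring
  simp only [fun i => hkron (d i) (Nat.card (H i) : ℂ)⁻¹ fun a => (b i a : W),
    fun j => hkron (d' j) (Nat.card (H' j) : ℂ)⁻¹ fun a => (b' j a : W),
    Finset.prod_mul_distrib, Finset.prod_pow_eq_pow_sum, Finset.prod_pow, hsum, div_pow]
  exact mul_div_mul_left _ _ (pow_ne_zero _ hdet)
end

section
/- Let G be a finite group and let H₁,…,H_r and H'₁,…,H'_s be subgroups of G such that the complex permutation representations ⊕ᵢ ℂ[G/Hᵢ] and ⊕ⱼ ℂ[G/H'ⱼ] are isomorphic as representations of G. Let ρ₁,…,ρ_t be pairwise non-isomorphic irreducible representations of G over ℚ, and let V be a finite-dimensional rational representation of G isomorphic to ⊕_k ρ_k^{⊕n_k}. Equip V with a G-invariant positive-definite symmetric ℚ-valued bilinear form B, and equip each ρ_k with a G-invariant positive-definite symmetric ℚ-valued bilinear form B_k. Then ∏ᵢ det((1/|Hᵢ|)B | V^{Hᵢ}) / ∏ⱼ det((1/|H'ⱼ|)B | V^{H'ⱼ})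 = q² · ∏_k ( ∏ᵢ det((1/|Hᵢ|)B_k | ρ_k^{Hᵢ}) / ∏ⱼ det((1/|H'ⱼ|)B_k | ρ_k^{H'ⱼ}) )^{n_k} for some nonzero rational number q, where all Gram determinants are computed with respect to arbitrary ℚ-bases of the respective fixed subspaces. -/
section EquivariantFunctions

variable {G V X Y Z : Type} [Group G] [AddCommGroup V] [Module ℚ V]
  [MulAction G X] [MulAction G Y] [MulAction G Z]

/-- The `G`-equivariant functions from a `G`-set `X` to a rational representation. -/
def equivariantFunctions (ρ : Representation ℚ G V) (X : Type) [MulAction G X] :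
    Submodule ℚ (X → V) where
  carrier := {f | ∀ (g : G) (x : X), f (g • x) = ρ g (f x)}
  add_mem' := by
    intro a b ha hb g x
    simp [ha g x, hb g x]
  zero_mem' := by
    intro g x
    simp
  smul_mem' := by
    intro c v hv g x
    simp [hv g x]

/-- A `G`-invariant rational matrix acts on equivariant functions. -/
def invariantMatrixMap [Fintype X] (ρ : Representation ℚ G V) (M : Matrix Y X ℚ)
    (hM : ∀ (g : G) (y : Y) (x : X), M (g • y) (g • x) = M y x) :
    equivariantFunctions ρ X →ₗ[ℚ] equivariantFunctions ρ Y where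
  toFun f := ⟨fun y => ∑ x, M y x • (f : X → V) x, by
    intro g y
    change ∑ x, M (g • y) x • (f : X → V) x = ρ g (∑ x, M y x • (f : X → V) x)
    rw [map_sum, ← Equiv.sum_comp (MulAction.toPerm g) fun x => M (g • y) x • (f : X → V) x]
    refine Finset.sum_congr rfl fun x _ => ?_
    rw [MulAction.toPerm_apply, hM, f.2 g x, map_smul]⟩
  map_add' f f' := by
    ext y
    simp [Finset.sum_add_distrib]
  map_smul' c f := by
    ext y
    simp [Finset.smul_sum, smul_comm c]

theorem invariantMatrixMap_apply [Fintype X] (ρ : Representation ℚ G V) (M : Matrix Y X ℚ)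
    (hM : ∀ (g : G) (y : Y) (x : X), M (g • y) (g • x) = M y x)
    (f : equivariantFunctions ρ X) (y : Y) :
    (invariantMatrixMap ρ M hM f : Y → V) y = ∑ x, M y x • (f : X → V) x := rfl

theorem invariant_mul [Fintype Y] {M : Matrix Y X ℚ} {L : Matrix Z Y ℚ}
    (hM : ∀ (g : G) (y : Y) (x : X), M (g • y) (g • x) = M y x)
    (hL : ∀ (g : G) (z : Z) (y : Y), L (g • z) (g • y) = L z y) (g : G) (z : Z) (x : X) :
    (L * M) (g • z) (g • x) = (L * M) z x := by
  rw [Matrix.mul_apply, Matrix.mul_apply, ← Equiv.sum_comp (MulAction.toPerm g)]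
  simp [hM, hL]

theorem invariantMatrixMap_invariantMatrixMap [Fintype X] [Fintype Y]
    (ρ : Representation ℚ G V) {M : Matrix Y X ℚ} {L : Matrix Z Y ℚ}
    (hM : ∀ (g : G) (y : Y) (x : X), M (g • y) (g • x) = M y x)
    (hL : ∀ (g : G) (z : Z) (y : Y), L (g • z) (g • y) = L z y)
    (f : equivariantFunctions ρ X) :
    invariantMatrixMap ρ L hL (invariantMatrixMap ρ M hM f) =
      invariantMatrixMap ρ (L * M) (invariant_mul hM hL) f := by
  ext z
  simp only [invariantMatrixMap_apply, Matrix.mul_apply, Finset.smul_sum, Finset.sum_smul,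
    smul_smul]
  exact Finset.sum_comm

theorem invariantMatrixMap_eq_self [Fintype X] [DecidableEq X] (ρ : Representation ℚ G V)
    {M : Matrix X X ℚ} (hM : ∀ (g : G) (y x : X), M (g • y) (g • x) = M y x) (h : M = 1)
    (f : equivariantFunctions ρ X) : invariantMatrixMap ρ M hM f = f := by
  subst h
  ext x
  simp [invariantMatrixMap_apply, Matrix.one_apply]

/-- Mutually inverse invariant matrices give an isomorphism between the spaces of equivariant
functions. -/
def invariantMatrixEquiv [Fintype X] [Fintype Y] [DecidableEq X] [DecidableEq Y]
    (ρ : Representation ℚ G V) {M : Matrix Y X ℚ} {L : Matrix X Y ℚ}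
    (hM : ∀ (g : G) (y : Y) (x : X), M (g • y) (g • x) = M y x)
    (hL : ∀ (g : G) (x : X) (y : Y), L (g • x) (g • y) = L x y)
    (hLM : L * M = 1) (hML : M * L = 1) :
    equivariantFunctions ρ X ≃ₗ[ℚ] equivariantFunctions ρ Y :=
  LinearEquiv.ofLinearMap (invariantMatrixMap ρ M hM) (invariantMatrixMap ρ L hL)
    (by
      ext1 f
      simp [invariantMatrixMap_invariantMatrixMap, invariantMatrixMap_eq_self ρ _ hML])
    (by
      ext1 f
      simp [invariantMatrixMap_invariantMatrixMap, invariantMatrixMap_eq_self ρ _ hLM])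

/-- The form on equivariant functions obtained by summing the values of `B` over `X`, normalized
by the order of `G`. -/
noncomputable def averagedForm (ρ : Representation ℚ G V) (X : Type) [MulAction G X]
    [Fintype X] (B : V →ₗ[ℚ] V →ₗ[ℚ] ℚ) : LinearMap.BilinForm ℚ (equivariantFunctions ρ X) :=
  (Nat.card G : ℚ)⁻¹ • ∑ x : X,
    B.compl₁₂ (LinearMap.proj x ∘ₗ (equivariantFunctions ρ X).subtype)
      (LinearMap.proj x ∘ₗ (equivariantFunctions ρ X).subtype)

theorem averagedForm_apply [Fintype X] (ρ : Representation ℚ G V) (B : V →ₗ[ℚ] V →ₗ[ℚ] ℚ)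
    (f f' : equivariantFunctions ρ X) :
    averagedForm ρ X B f f' =
      (Nat.card G : ℚ)⁻¹ * ∑ x, B ((f : X → V) x) ((f' : X → V) x) := by
  simp [averagedForm, LinearMap.sum_apply]

theorem invariant_transpose {M : Matrix Y X ℚ}
    (hM : ∀ (g : G) (y : Y) (x : X), M (g • y) (g • x) = M y x) (g : G) (x : X) (y : Y) :
    M.transpose (g • x) (g • y) = M.transpose x y := hM g y x

theorem averagedForm_invariantMatrixMap [Fintype X] [Fintype Y] (ρ : Representation ℚ G V)
    (B : V →ₗ[ℚ] V →ₗ[ℚ] ℚ) {M : Matrix Y X ℚ}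
    (hM : ∀ (g : G) (y : Y) (x : X), M (g • y) (g • x) = M y x)
    (f f' : equivariantFunctions ρ X) :
    averagedForm ρ Y B (invariantMatrixMap ρ M hM f) (invariantMatrixMap ρ M hM f') =
      averagedForm ρ X B
        (invariantMatrixMap ρ (M.transpose * M) (invariant_mul hM (invariant_transpose hM)) f)
        f' := by
  simp only [averagedForm_apply, ← invariantMatrixMap_invariantMatrixMap ρ hM
    (invariant_transpose hM)]
  congr 1
  simp only [invariantMatrixMap_apply ρ M.transpose, Matrix.transpose_apply, map_sum, map_smul,
    LinearMap.sum_apply, LinearMap.smul_apply]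
  rw [Finset.sum_comm]
  refine Finset.sum_congr rfl fun y _ => ?_
  rw [invariantMatrixMap_apply ρ M hM f' y]
  simp

theorem averagedForm_nondegenerate [Finite G] [Fintype X] [Module.Finite ℚ V]
    (ρ : Representation ℚ G V)
    (B : V →ₗ[ℚ] V →ₗ[ℚ] ℚ) (hB : ∀ v, v ≠ 0 → 0 < B v v) :
    (averagedForm ρ X B).Nondegenerate := by
  refine .ofSeparatingLeft fun f hf => ?_
  have h := hf f
  have hc : (Nat.card G : ℚ) ≠ 0 := Nat.cast_ne_zero.mpr Nat.card_pos.ne'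
  have hnn : ∀ v, 0 ≤ B v v := fun v => by
    by_cases hv : v = 0
    · simp [hv]
    · exact (hB v hv).le
  rw [averagedForm_apply, mul_eq_zero, or_iff_right (inv_ne_zero hc),
    Finset.sum_eq_zero_iff_of_nonneg fun x _ => hnn _] at h
  ext x
  by_contra hx
  exact (hB _ hx).ne' (h x (Finset.mem_univ x))

end EquivariantFunctions

section Determinants

theorem exists_det_toMatrix_eq_sq_mul {ι κ E : Type} [Fintype ι] [DecidableEq ι] [Fintype κ]
    [DecidableEq κ] [AddCommGroup E] [Module ℚ E] (b : Module.Basis ι ℚ E)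
    (c : Module.Basis κ ℚ E) (β : LinearMap.BilinForm ℚ E) :
    ∃ q : ℚ, q ≠ 0 ∧ (LinearMap.BilinForm.toMatrix c β).det =
      q ^ 2 * (LinearMap.BilinForm.toMatrix b β).det := by
  let σ := c.indexEquiv b
  refine ⟨b.det (c.reindex σ), (b.isUnit_det _).ne_zero, ?_⟩
  have h1 : (LinearMap.BilinForm.toMatrix c β).det =
      (LinearMap.BilinForm.toMatrix (c.reindex σ) β).det := by
    rw [← Matrix.det_submatrix_equiv_self σ.symm (LinearMap.BilinForm.toMatrix c β)]
    congr 1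
    ext i j
    simp [LinearMap.BilinForm.toMatrix_apply]
  rw [h1, ← LinearMap.BilinForm.toMatrix_mul_basis_toMatrix b (c.reindex σ) β, Matrix.det_mul,
    Matrix.det_mul, Matrix.det_transpose, Module.Basis.det_apply]
  ring

theorem Matrix.det_blockDiagonal'_eq_prod {ι : Type} [Fintype ι] [LinearOrder ι] {m : ι → Type}
    [∀ i, Fintype (m i)] [∀ i, DecidableEq (m i)] (A : ∀ i, Matrix (m i) (m i) ℚ) :
    (Matrix.blockDiagonal' A).det = ∏ i, (A i).det := by
  rw [(Matrix.blockTriangular_blockDiagonal' A).det_fintype]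
  refine Finset.prod_congr rfl fun i _ => ?_
  rw [← Matrix.det_submatrix_equiv_self (Equiv.sigmaSubtype i).symm]
  congr 1
  ext a b
  simp [Matrix.toSquareBlock_def, Equiv.sigmaSubtype]

theorem LinearMap.det_piMap_eq_prod {ι : Type} [Fintype ι] [LinearOrder ι] {E : ι → Type}
    [∀ i, AddCommGroup (E i)] [∀ i, Module ℚ (E i)] [∀ i, Module.Finite ℚ (E i)]
    (f : ∀ i, E i →ₗ[ℚ] E i) :
    LinearMap.det (LinearMap.pi fun i => f i ∘ₗ LinearMap.proj i) =
      ∏ i, LinearMap.det (f i) := by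
  let b i := Module.finBasis ℚ (E i)
  rw [← LinearMap.det_toMatrix (Pi.basis b)]
  have h : LinearMap.toMatrix (Pi.basis b) (Pi.basis b)
      (LinearMap.pi fun i => f i ∘ₗ LinearMap.proj i) =
      Matrix.blockDiagonal' fun i => LinearMap.toMatrix (b i) (b i) (f i) := by
    ext ⟨i, a⟩ ⟨j, c⟩
    rw [LinearMap.toMatrix_apply, Pi.basis_apply, Pi.basis_repr]
    by_cases hij : i = j
    · subst hij
      simp [LinearMap.toMatrix_apply]
    · simp [Matrix.blockDiagonal'_apply_ne _ _ _ hij, Pi.single_eq_of_ne hij]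
  rw [h, Matrix.det_blockDiagonal'_eq_prod]
  simp

end Determinants

section Descent

variable {G X Y : Type} [Group G] [MulAction G X] [MulAction G Y] [Fintype X] [Fintype Y]
  [DecidableEq X] [DecidableEq Y]

theorem invariant_of_inverse {M : Matrix Y X ℚ} {L : Matrix X Y ℚ}
    (hM : ∀ (g : G) (y : Y) (x : X), M (g • y) (g • x) = M y x)
    (hLM : L * M = 1) (hML : M * L = 1) (g : G) (x : X) (y : Y) :
    L (g • x) (g • y) = L x y := by
  let L' : Matrix X Y ℚ := L.submatrix (MulAction.toPerm g) (MulAction.toPerm g)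
  have hM' : M.submatrix (MulAction.toPerm g) (MulAction.toPerm g) = M := by
    ext y x
    exact hM g y x
  have h : L' * M = 1 := by
    rw [← hM', Matrix.submatrix_mul_equiv, hLM, Matrix.submatrix_one_equiv]
  have : L' = L := by
    rw [← Matrix.mul_one L', ← hML, ← Matrix.mul_assoc, h, Matrix.one_mul]
  exact congrFun (congrFun this x) y

/-- Isomorphic complex permutation representations are already isomorphic over `ℚ`, in matrix
form. -/
theorem exists_rational_invariant_matrix (e : (X →₀ ℂ) ≃ₗ[ℂ] (Y →₀ ℂ))
    (he : ∀ (g : G) (v : X →₀ ℂ),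
      e (Representation.ofMulAction ℂ G X g (MonoidAlgebra.ofCoeff v)).coeff =
        (Representation.ofMulAction ℂ G Y g (MonoidAlgebra.ofCoeff (e v))).coeff) :
    ∃ (M : Matrix Y X ℚ) (L : Matrix X Y ℚ),
      (∀ (g : G) (y : Y) (x : X), M (g • y) (g • x) = M y x) ∧ L * M = 1 ∧ M * L = 1 := by
  let σ : X ≃ Y := (Finsupp.basisSingleOne.map e).indexEquiv Finsupp.basisSingleOne
  have hinv : ∀ (g : G) (y : Y) (x : X),
      e (Finsupp.single (g • x) 1) (g • y) = e (Finsupp.single x 1) y := by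
    intro g y x
    have h := congrArg (fun f : Y →₀ ℂ => f (g • y)) (he g (Finsupp.single x 1))
    simpa [Representation.coeff_ofMulAction] using h
  let c : MulAction.orbitRel.Quotient G (Y × X) → ℂ :=
    Quotient.lift (fun p => e (Finsupp.single p.2 1) p.1) (by
      rintro _ ⟨y, x⟩ ⟨g, rfl⟩
      exact hinv g y x)
  let P : Matrix X X (MvPolynomial (MulAction.orbitRel.Quotient G (Y × X)) ℚ) :=
    Matrix.of fun x x' => MvPolynomial.X (Quotient.mk _ (σ x, x'))
  have hP : P.det ≠ 0 := by
    intro h0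
    have h1 := e.isUnit_det Finsupp.basisSingleOne (Finsupp.basisSingleOne.reindex σ.symm)
    refine h1.ne_zero ?_
    have h2 := congrArg (MvPolynomial.aeval c) h0
    rw [AlgHom.map_det, map_zero] at h2
    rw [← h2]
    congr 1
    ext x x'
    simp [P, c, LinearMap.toMatrix_apply]
  obtain ⟨a, ha⟩ : ∃ a : MulAction.orbitRel.Quotient G (Y × X) → ℚ,
      MvPolynomial.eval a P.det ≠ 0 := by
    by_contra! h
    exact hP (MvPolynomial.funext fun a => by simpa using h a)
  let M : Matrix Y X ℚ := Matrix.of fun y x => a (Quotient.mk _ (y, x))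
  let N : Matrix X X ℚ := M.submatrix σ id
  have hN : IsUnit N.det := by
    rw [isUnit_iff_ne_zero]
    rw [RingHom.map_det] at ha
    convert ha using 2
    ext x x'
    simp [P, N, M]
  have hMN : M = N.submatrix σ.symm (Equiv.refl X) := by
    ext y x
    simp [N]
  refine ⟨M, N⁻¹.submatrix (Equiv.refl X) σ.symm, fun g y x => ?_, ?_, ?_⟩
  · exact congrArg a (Quotient.sound ⟨g, rfl⟩)
  · rw [hMN, Matrix.submatrix_mul_equiv, Matrix.nonsing_inv_mul _ hN, Matrix.submatrix_one_equiv]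
  · rw [hMN, Matrix.submatrix_mul_equiv, Matrix.mul_nonsing_inv _ hN, Matrix.submatrix_one_equiv]

end Descent

section FixedSubmodules

variable {G V : Type} [Group G] [AddCommGroup V] [Module ℚ V]

theorem smul_sigma_mk_one {r : ℕ} (H : Fin r → Subgroup G) (a : G) (i : Fin r) :
    a • (⟨i, ((1 : G) : G ⧸ H i)⟩ : Σ i, G ⧸ H i) = ⟨i, (a : G ⧸ H i)⟩ := by
  change (⟨i, ((a * 1 : G) : G ⧸ H i)⟩ : Σ i, G ⧸ H i) = _
  rw [mul_one]

/-- An equivariant function on `Σ i, G ⧸ H i` is determined by its values at the base points,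
which are arbitrary `H i`-fixed vectors. -/
def equivariantFunctionsEquivPi {r : ℕ} (ρ : Representation ℚ G V) (H : Fin r → Subgroup G) :
    equivariantFunctions ρ (Σ i, G ⧸ H i) ≃ₗ[ℚ] ∀ i, fixedSubmodule ρ (H i) where
  toFun f i := ⟨f.1 ⟨i, ((1 : G) : G ⧸ H i)⟩, by
    intro h hh
    rw [← f.2 h, smul_sigma_mk_one, QuotientGroup.eq.mpr (by simpa using hh :
      h⁻¹ * 1 ∈ H i)]⟩
  map_add' _ _ := rfl
  map_smul' _ _ := rfl
  invFun v := ⟨fun p => Quotient.liftOn' p.2 (fun g => ρ g (v p.1 : V)) (by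
      intro a b hab
      rw [QuotientGroup.leftRel_apply] at hab
      have h := (v p.1).2 _ hab
      change ρ a (v p.1 : V) = ρ b (v p.1 : V)
      rw [← h, ← Module.End.mul_apply, ← map_mul, mul_inv_cancel_left, h]), by
    rintro g ⟨i, x⟩
    induction x using QuotientGroup.induction_on with
    | H a =>
      change ρ (g * a) (v i : V) = ρ g (ρ a (v i : V))
      rw [map_mul, Module.End.mul_apply]⟩
  left_inv f := by
    ext ⟨i, x⟩
    induction x using QuotientGroup.induction_on with
    | H a =>
      change ρ a (f.1 ⟨i, ((1 : G) : G ⧸ H i)⟩) = _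
      rw [← f.2 a, smul_sigma_mk_one]
  right_inv v := by
    ext i
    change ρ 1 (v i : V) = v i
    simp

theorem averagedForm_eq_sum_fixed [Finite G] {r : ℕ} (ρ : Representation ℚ G V)
    (H : Fin r → Subgroup G) [∀ i, Fintype (G ⧸ H i)] (B : V →ₗ[ℚ] V →ₗ[ℚ] ℚ)
    (hB : ∀ (g : G) (v w : V), B (ρ g v) (ρ g w) = B v w)
    (f f' : equivariantFunctions ρ (Σ i, G ⧸ H i)) :
    averagedForm ρ (Σ i, G ⧸ H i) B f f' =
      ∑ i, (Nat.card (H i) : ℚ)⁻¹ * B (equivariantFunctionsEquivPi ρ H f i : V)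
        (equivariantFunctionsEquivPi ρ H f' i : V) := by
  rw [averagedForm_apply, Fintype.sum_sigma, Finset.mul_sum]
  refine Finset.sum_congr rfl fun i _ => ?_
  have h : ∀ x : G ⧸ H i, B (f.1 ⟨i, x⟩) (f'.1 ⟨i, x⟩) =
      B (equivariantFunctionsEquivPi ρ H f i : V) (equivariantFunctionsEquivPi ρ H f' i : V) := by
    intro x
    induction x using QuotientGroup.induction_on with
    | H a =>
      rw [← smul_sigma_mk_one, f.2, f'.2, hB]
      rfl
  rw [Finset.sum_congr rfl fun x _ => h x, Finset.sum_const, Finset.card_univ, nsmul_eq_mul,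
    ← mul_assoc, (H i).card_eq_card_quotient_mul_card_subgroup,
    Nat.card_eq_fintype_card (α := G ⧸ H i)]
  congr 1
  have h1 : (Fintype.card (G ⧸ H i) : ℚ) ≠ 0 := Nat.cast_ne_zero.mpr Fintype.card_ne_zero
  have h2 : (Nat.card (H i) : ℚ) ≠ 0 := Nat.cast_ne_zero.mpr Nat.card_pos.ne'
  push_cast
  field_simp

theorem det_averagedForm_eq_prod [Finite G] {r : ℕ} (ρ : Representation ℚ G V)
    (H : Fin r → Subgroup G) [∀ i, Fintype (G ⧸ H i)] (B : V →ₗ[ℚ] V →ₗ[ℚ] ℚ)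
    (hB : ∀ (g : G) (v w : V), B (ρ g v) (ρ g w) = B v w) (d : Fin r → ℕ)
    (b : ∀ i, Module.Basis (Fin (d i)) ℚ (fixedSubmodule ρ (H i))) :
    (LinearMap.BilinForm.toMatrix ((Pi.basis b).map (equivariantFunctionsEquivPi ρ H).symm)
      (averagedForm ρ (Σ i, G ⧸ H i) B)).det =
    ∏ i, (Matrix.of fun a c : Fin (d i) =>
      (Nat.card (H i) : ℚ)⁻¹ * B (b i a : V) (b i c : V)).det := by
  rw [← Matrix.det_blockDiagonal'_eq_prod]
  congr 1
  ext ⟨i, a⟩ ⟨j, c⟩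
  rw [LinearMap.BilinForm.toMatrix_apply, averagedForm_eq_sum_fixed ρ H B hB]
  simp only [Module.Basis.map_apply, LinearEquiv.apply_symm_apply, Pi.basis_apply]
  rw [Finset.sum_eq_single i (fun k _ hk => by simp [Pi.single_eq_of_ne hk]) (by simp)]
  by_cases hij : i = j
  · subst hij
    simp
  · simp [Matrix.blockDiagonal'_apply_ne _ _ _ hij, Pi.single_eq_of_ne hij]

/-- Up to squares, the quotient of Gram determinants does not depend on the form. -/
theorem exists_gram_det_quotient_eq [Finite G] [Module.Finite ℚ V] {r s : ℕ}
    (ρ : Representation ℚ G V) (H : Fin r → Subgroup G) (H' : Fin s → Subgroup G)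
    [∀ i, Fintype (G ⧸ H i)] [∀ j, Fintype (G ⧸ H' j)]
    [DecidableEq (Σ i, G ⧸ H i)] [DecidableEq (Σ j, G ⧸ H' j)]
    {M : Matrix (Σ j, G ⧸ H' j) (Σ i, G ⧸ H i) ℚ} {L : Matrix (Σ i, G ⧸ H i) (Σ j, G ⧸ H' j) ℚ}
    (hM : ∀ (g : G) (y : Σ j, G ⧸ H' j) (x : Σ i, G ⧸ H i), M (g • y) (g • x) = M y x)
    (hLM : L * M = 1) (hML : M * L = 1) (B : V →ₗ[ℚ] V →ₗ[ℚ] ℚ)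
    (hBinv : ∀ (g : G) (v w : V), B (ρ g v) (ρ g w) = B v w)
    (hBpos : ∀ v : V, v ≠ 0 → 0 < B v v) (d : Fin r → ℕ) (d' : Fin s → ℕ)
    (b : ∀ i, Module.Basis (Fin (d i)) ℚ (fixedSubmodule ρ (H i)))
    (b' : ∀ j, Module.Basis (Fin (d' j)) ℚ (fixedSubmodule ρ (H' j))) :
    ∃ q : ℚ, q ≠ 0 ∧
      (∏ i, (Matrix.of fun a c : Fin (d i) =>
          (Nat.card (H i) : ℚ)⁻¹ * B (b i a : V) (b i c : V)).det) /
        (∏ j, (Matrix.of fun a c : Fin (d' j) =>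
          (Nat.card (H' j) : ℚ)⁻¹ * B (b' j a : V) (b' j c : V)).det) =
      q ^ 2 * (LinearMap.det (invariantMatrixMap ρ (M.transpose * M)
        (invariant_mul hM (invariant_transpose hM))))⁻¹ := by
  rw [← det_averagedForm_eq_prod ρ H B hBinv d b, ← det_averagedForm_eq_prod ρ H' B hBinv d' b']
  set c := (Pi.basis b).map (equivariantFunctionsEquivPi ρ H).symm
  set c' := (Pi.basis b').map (equivariantFunctionsEquivPi ρ H').symm
  let Φ := invariantMatrixEquiv ρ hM (invariant_of_inverse hM hLM hML) hLM hML
  obtain ⟨q, hq, h⟩ := exists_det_toMatrix_eq_sq_mul c' (c.map Φ) (averagedForm ρ _ B)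
  refine ⟨q, hq, ?_⟩
  have hc := (LinearMap.BilinForm.nondegenerate_iff_det_ne_zero c).mp
    (averagedForm_nondegenerate ρ B hBpos)
  have hc' := (LinearMap.BilinForm.nondegenerate_iff_det_ne_zero c').mp
    (averagedForm_nondegenerate ρ B hBpos)
  set N := invariantMatrixMap ρ (M.transpose * M) (invariant_mul hM (invariant_transpose hM))
  have hN : (LinearMap.BilinForm.toMatrix (c.map Φ) (averagedForm ρ _ B)).det =
      LinearMap.det N * (LinearMap.BilinForm.toMatrix c (averagedForm ρ _ B)).det := by
    have h1 : LinearMap.BilinForm.toMatrix (c.map Φ) (averagedForm ρ _ B) =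
        LinearMap.BilinForm.toMatrix c ((averagedForm ρ _ B).compLeft N) := by
      ext p p'
      simp only [LinearMap.BilinForm.toMatrix_apply, Module.Basis.map_apply]
      exact averagedForm_invariantMatrixMap ρ B hM (c p) (c p')
    rw [h1, LinearMap.BilinForm.toMatrix_compLeft, Matrix.det_mul, Matrix.det_transpose,
      LinearMap.det_toMatrix]
  rw [hN] at h
  have hD : LinearMap.det N ≠ 0 := by
    intro h0
    rw [h0, zero_mul] at h
    exact mul_ne_zero (pow_ne_zero 2 hq) hc' h.symm
  rw [div_eq_iff hc']
  field_simp
  linear_combination h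

end FixedSubmodules

section DirectSums

variable {G X : Type} [Group G] [MulAction G X]

/-- Equivariant functions into a direct sum decompose componentwise. -/
def equivariantFunctionsPiEquiv {t : ℕ} {W : Fin t → Type} [∀ k, AddCommGroup (W k)]
    [∀ k, Module ℚ (W k)] (ρ : ∀ k, Representation ℚ G (W k)) {V : Type} [AddCommGroup V]
    [Module ℚ V] (ρV : Representation ℚ G V) (n : Fin t → ℕ)
    (ψ : V ≃ₗ[ℚ] ∀ k, Fin (n k) → W k)
    (hψ : ∀ (g : G) (v : V), ψ (ρV g v) = fun k m => ρ k g (ψ v k m)) :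
    equivariantFunctions ρV X ≃ₗ[ℚ] ∀ k, Fin (n k) → equivariantFunctions (ρ k) X where
  toFun f k m := ⟨fun x => ψ ((f : X → V) x) k m, fun g x => by
    change ψ ((f : X → V) (g • x)) k m = _
    rw [f.2 g x, hψ]⟩
  map_add' f f' := by
    ext k m x
    simp
  map_smul' c f := by
    ext k m x
    simp
  invFun F := ⟨fun x => ψ.symm fun k m => (F k m : X → W k) x, fun g x => by
    apply ψ.injective
    rw [hψ, LinearEquiv.apply_symm_apply, LinearEquiv.apply_symm_apply]
    ext k m
    exact (F k m).2 g x⟩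
  left_inv f := by
    ext x
    exact ψ.symm_apply_apply _
  right_inv F := by
    ext k m x
    change ψ (ψ.symm fun k m => (F k m : X → W k) x) k m = _
    rw [LinearEquiv.apply_symm_apply]

theorem det_invariantMatrixMap_eq_prod [Fintype X] {t : ℕ} {W : Fin t → Type}
    [∀ k, AddCommGroup (W k)] [∀ k, Module ℚ (W k)] [∀ k, Module.Finite ℚ (W k)]
    (ρ : ∀ k, Representation ℚ G (W k)) {V : Type} [AddCommGroup V]
    [Module ℚ V] (ρV : Representation ℚ G V) (n : Fin t → ℕ)
    (ψ : V ≃ₗ[ℚ] ∀ k, Fin (n k) → W k)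
    (hψ : ∀ (g : G) (v : V), ψ (ρV g v) = fun k m => ρ k g (ψ v k m))
    (N : Matrix X X ℚ) (hN : ∀ (g : G) (y x : X), N (g • y) (g • x) = N y x) :
    LinearMap.det (invariantMatrixMap ρV N hN) =
      ∏ k, LinearMap.det (invariantMatrixMap (ρ k) N hN) ^ n k := by
  let Ψ := equivariantFunctionsPiEquiv (X := X) ρ ρV n ψ hψ
  rw [← LinearMap.det_conj _ Ψ]
  have h : Ψ.toLinearMap ∘ₗ invariantMatrixMap ρV N hN ∘ₗ Ψ.symm.toLinearMap =
      LinearMap.pi fun k => (LinearMap.pi fun m : Fin (n k) =>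
        invariantMatrixMap (ρ k) N hN ∘ₗ LinearMap.proj m) ∘ₗ LinearMap.proj k := by
    rw [← LinearMap.comp_assoc, LinearEquiv.comp_toLinearMap_symm_eq]
    ext f k m x
    change ψ (∑ x', N x x' • (f : X → V) x') k m = ∑ x', N x x' • ψ ((f : X → V) x') k m
    simp
  rw [h, LinearMap.det_piMap_eq_prod]
  simp [LinearMap.det_piMap_eq_prod]

end DirectSums
/-- Theorem 2.5 of the paper: given a relation `⊕ᵢ ℂ[G/Hᵢ] ≅ ⊕ⱼ ℂ[G/H'ⱼ]`, pairwise
non-isomorphic irreducible rational representations `ρ_k` on spaces `W k`, a rational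
representation `V ≅ ⊕_k ρ_k^{⊕n_k}` with a `G`-invariant positive-definite symmetric
bilinear form `B`, and `G`-invariant positive-definite symmetric bilinear forms `B_k` on
each `ρ_k`, the quotient of Gram determinants for `V` equals, up to a nonzero rational
square, the product over `k` of the `n_k`-th powers of the corresponding quotients for
`ρ_k`; all Gram determinants with respect to arbitrary `ℚ`-bases of the fixed subspaces. -/
theorem gram_det_quotient_eq_prod_regulator_constants
    {G : Type} [Group G] [Fintype G]
    {r s : ℕ} (H : Fin r → Subgroup G) (H' : Fin s → Subgroup G)
    (e : ((Σ i : Fin r, G ⧸ H i) →₀ ℂ) ≃ₗ[ℂ] ((Σ j : Fin s, G ⧸ H' j) →₀ ℂ))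
    (he : ∀ (g : G) (v : (Σ i : Fin r, G ⧸ H i) →₀ ℂ),
      e (Representation.ofMulAction ℂ G (Σ i : Fin r, G ⧸ H i) g (MonoidAlgebra.ofCoeff v)).coeff =
        (Representation.ofMulAction ℂ G (Σ j : Fin s, G ⧸ H' j) g (MonoidAlgebra.ofCoeff (e v))).coeff)
    -- the pairwise non-isomorphic irreducible rational representations ρ_k
    {t : ℕ} (W : Fin t → Type)
    [∀ k, AddCommGroup (W k)] [∀ k, Module ℚ (W k)] [∀ k, FiniteDimensional ℚ (W k)]
    [∀ k, Nontrivial (W k)]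
    (ρ : ∀ k, Representation ℚ G (W k))
    (hirr : ∀ k, ∀ U : Submodule ℚ (W k), (∀ g : G, ∀ w ∈ U, ρ k g w ∈ U) → U = ⊥ ∨ U = ⊤)
    (hnoniso : ∀ k l, k ≠ l →
      ¬∃ φ : W k ≃ₗ[ℚ] W l, ∀ (g : G) (w : W k), φ (ρ k g w) = ρ l g (φ w))
    -- the rational representation V, isomorphic to ⊕_k ρ_k^{⊕ n_k}
    {V : Type} [AddCommGroup V] [Module ℚ V]
    (ρV : Representation ℚ G V)
    (n : Fin t → ℕ) (ψ : V ≃ₗ[ℚ] ∀ k, Fin (n k) → W k)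
    (hψ : ∀ (g : G) (v : V), ψ (ρV g v) = fun k m => ρ k g (ψ v k m))
    -- the G-invariant positive-definite symmetric bilinear forms
    (B : V →ₗ[ℚ] V →ₗ[ℚ] ℚ)
    (hBinv : ∀ (g : G) (v w : V), B (ρV g v) (ρV g w) = B v w)
    (hBsymm : ∀ v w : V, B v w = B w v)
    (hBpos : ∀ v : V, v ≠ 0 → 0 < B v v)
    (Bk : ∀ k, W k →ₗ[ℚ] W k →ₗ[ℚ] ℚ)
    (hBkinv : ∀ k, ∀ (g : G) (v w : W k), Bk k (ρ k g v) (ρ k g w) = Bk k v w)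
    (hBksymm : ∀ k, ∀ v w : W k, Bk k v w = Bk k w v)
    (hBkpos : ∀ k, ∀ v : W k, v ≠ 0 → 0 < Bk k v v)
    -- arbitrary bases of the fixed subspaces
    (dV : Fin r → ℕ) (dV' : Fin s → ℕ)
    (bV : ∀ i, Module.Basis (Fin (dV i)) ℚ (fixedSubmodule ρV (H i)))
    (bV' : ∀ j, Module.Basis (Fin (dV' j)) ℚ (fixedSubmodule ρV (H' j)))
    (dW : Fin t → Fin r → ℕ) (dW' : Fin t → Fin s → ℕ)
    (bW : ∀ k i, Module.Basis (Fin (dW k i)) ℚ (fixedSubmodule (ρ k) (H i)))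
    (bW' : ∀ k j, Module.Basis (Fin (dW' k j)) ℚ (fixedSubmodule (ρ k) (H' j))) :
    ∃ q : ℚ, q ≠ 0 ∧
      (∏ i, (Matrix.of fun a c : Fin (dV i) =>
          ((Nat.card (H i) : ℚ))⁻¹ * B (bV i a : V) (bV i c : V)).det) /
        (∏ j, (Matrix.of fun a c : Fin (dV' j) =>
          ((Nat.card (H' j) : ℚ))⁻¹ * B (bV' j a : V) (bV' j c : V)).det) =
      q ^ 2 * ∏ k,
        ((∏ i, (Matrix.of fun a c : Fin (dW k i) =>
            ((Nat.card (H i) : ℚ))⁻¹ * Bk k (bW k i a : W k) (bW k i c : W k)).det) /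
          (∏ j, (Matrix.of fun a c : Fin (dW' k j) =>
            ((Nat.card (H' j) : ℚ))⁻¹ * Bk k (bW' k j a : W k) (bW' k j c : W k)).det)) ^ (n k) := by
  classical
  obtain ⟨M, L, hM, hLM, hML⟩ := exists_rational_invariant_matrix e he
  have : Module.Finite ℚ V := Module.Finite.equiv ψ.symm
  obtain ⟨q, hq, h⟩ :=
    exists_gram_det_quotient_eq ρV H H' hM hLM hML B hBinv hBpos dV dV' bV bV'
  choose p hp hk using fun k => exists_gram_det_quotient_eq (ρ k) H H' hM hLM hML (Bk k)
    (hBkinv k) (hBkpos k) (dW k) (dW' k) (bW k) (bW' k)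
  have hp' : ∏ k, p k ^ n k ≠ 0 := Finset.prod_ne_zero_iff.mpr fun k _ => pow_ne_zero _ (hp k)
  refine ⟨q / ∏ k, p k ^ n k, div_ne_zero hq hp', ?_⟩
  simp only [h, hk, det_invariantMatrixMap_eq_prod ρ ρV n ψ hψ]
  have hsq : ∏ k, (p k ^ 2) ^ n k = (∏ k, p k ^ n k) ^ 2 := by
    rw [← Finset.prod_pow]
    exact Finset.prod_congr rfl fun k _ => pow_right_comm _ _ _
  simp only [mul_pow, Finset.prod_mul_distrib, inv_pow, Finset.prod_inv_distrib]
  rw [hsq, div_pow, ← mul_assoc, div_mul_cancel₀ _ (pow_ne_zero 2 hp')]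
end

section
/- Let G = S₃ be the symmetric group on {1,2,3}, C₂ = ⟨(1 2)⟩ and C₃ = ⟨(1 2 3)⟩. For every irreducible rational representation ρ of S₃ (trivial, sign, or the 2-dimensional one) and every G-invariant positive-definite symmetric ℚ-valued bilinear form B on ρ, the quantity det((1/6)B | ρ^{S₃})² · det(B | ρ) / ( det((1/2)B | ρ^{C₂})² · det((1/3)B | ρ^{C₃}) ), computed with respect to arbitrary ℚ-bases of the fixed subspaces, equals 3·q² for some nonzero rational number q. -/
open Module

/-- Gram determinants of a bilinear form in two bases differ by a nonzero square. -/
theorem exists_sq_mul_det_gram {M : Type*} [AddCommGroup M] [Module ℚ M] {m n : ℕ}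
    (B : M →ₗ[ℚ] M →ₗ[ℚ] ℚ) (b : Basis (Fin n) ℚ M) (c : Basis (Fin m) ℚ M) :
    ∃ q : ℚ, q ≠ 0 ∧ (Matrix.of fun i j => B (b i) (b j)).det =
      q ^ 2 * (Matrix.of fun i j => B (c i) (c j)).det := by
  obtain rfl : n = m := by
    simpa using (finrank_eq_card_basis b).symm.trans (finrank_eq_card_basis c)
  refine ⟨(c.toMatrix b).det, ?_, ?_⟩
  · rw [← Basis.det_apply]
    exact (c.isUnit_det b).ne_zero
  · have h := LinearMap.toMatrix₂_mul_basis_toMatrix c c b b B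
    have hb : LinearMap.toMatrix₂ b b B = Matrix.of fun i j => B (b i) (b j) := by
      ext i j
      simp [LinearMap.toMatrix₂_apply]
    have hc : LinearMap.toMatrix₂ c c B = Matrix.of fun i j => B (c i) (c j) := by
      ext i j
      simp [LinearMap.toMatrix₂_apply]
    rw [← hb, ← hc, ← h, Matrix.det_mul, Matrix.det_mul, Matrix.det_transpose]
    ring

/-- The Gram determinant of a basis of `W`, computed from a linearly independent spanning family. -/
theorem exists_sq_mul_det_gram_of_span {V : Type*} [AddCommGroup V] [Module ℚ V] {m n : ℕ}
    (B : V →ₗ[ℚ] V →ₗ[ℚ] ℚ) (k : ℚ) {W : Submodule ℚ V} (b : Basis (Fin n) ℚ W)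
    {v : Fin m → V} (hv : LinearIndependent ℚ v) (hW : W = Submodule.span ℚ (Set.range v)) :
    ∃ q : ℚ, q ≠ 0 ∧ (Matrix.of fun i j => k * B (b i) (b j)).det =
      q ^ 2 * (Matrix.of fun i j => k * B (v i) (v j)).det := by
  subst hW
  simpa [Basis.span_apply, LinearMap.domRestrict₁₂_apply] using
    exists_sq_mul_det_gram ((k • B).domRestrict₁₂ _ _) b (Basis.span hv)

theorem exists_sq_mul_det_gram_of_span_singleton {V : Type*} [AddCommGroup V] [Module ℚ V]
    {n : ℕ} (B : V →ₗ[ℚ] V →ₗ[ℚ] ℚ) (k : ℚ) {W : Submodule ℚ V} (b : Basis (Fin n) ℚ W)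
    {v : V} (hv : v ≠ 0) (hW : W = Submodule.span ℚ {v}) :
    ∃ q : ℚ, q ≠ 0 ∧
      (Matrix.of fun i j => k * B (b i) (b j)).det = q ^ 2 * (k * B v v) := by
  have hli : LinearIndependent ℚ ![v] := by
    rw [linearIndependent_unique_iff]
    simpa using hv
  simpa using exists_sq_mul_det_gram_of_span B k b hli (by simpa using hW)

theorem det_gram_of_eq_bot {V : Type*} [AddCommGroup V] [Module ℚ V]
    {n : ℕ} (B : V →ₗ[ℚ] V →ₗ[ℚ] ℚ) (k : ℚ) {W : Submodule ℚ V} (b : Basis (Fin n) ℚ W)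
    (hW : W = ⊥) : (Matrix.of fun i j => k * B (b i) (b j)).det = 1 := by
  subst hW
  obtain rfl : n = 0 := by simpa using (finrank_eq_card_basis b).symm
  exact Matrix.det_isEmpty

theorem mem_fixedSubmodule_zpowers {G V : Type} [Group G] [AddCommGroup V] [Module ℚ V]
    (ρ : Representation ℚ G V) (g : G) (v : V) :
    v ∈ fixedSubmodule ρ (Subgroup.zpowers g) ↔ ρ g v = v := by
  refine ⟨fun h => h g (Subgroup.mem_zpowers g), fun h x hx => ?_⟩
  let S : Subgroup G :=
    { carrier := {x | ρ x v = v}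
      mul_mem' := fun {a b} ha hb => by
        simp only [Set.mem_ofPred_eq] at *
        rw [map_mul, Module.End.mul_apply, hb, ha]
      one_mem' := by simp
      inv_mem' := fun {a} ha => by
        simp only [Set.mem_ofPred_eq] at *
        nth_rewrite 1 [← ha]
        simp }
  exact (Subgroup.zpowers_le (H := S)).2 h hx

theorem perm_fin_three_cases (g : Equiv.Perm (Fin 3)) :
    g = 1 ∨ g = finRotate 3 ∨ g = finRotate 3 * finRotate 3 ∨ g = Equiv.swap 0 1 ∨
      g = finRotate 3 * Equiv.swap 0 1 ∨ g = finRotate 3 * finRotate 3 * Equiv.swap 0 1 := by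
  revert g
  decide

/-- A subspace stable under the rotation and the transposition is stable under `S₃`. -/
theorem stable_of_generators {V : Type*} [AddCommGroup V] [Module ℚ V]
    (ρ : Representation ℚ (Equiv.Perm (Fin 3)) V) (U : Submodule ℚ V)
    (hr : ∀ v ∈ U, ρ (finRotate 3) v ∈ U) (hs : ∀ v ∈ U, ρ (Equiv.swap 0 1) v ∈ U)
    (g : Equiv.Perm (Fin 3)) (v : V) (hv : v ∈ U) : ρ g v ∈ U := by
  rcases perm_fin_three_cases g with rfl | rfl | rfl | rfl | rfl | rfl
  · simpa using hv
  · exact hr v hv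
  · simpa using hr _ (hr v hv)
  · exact hs v hv
  · simpa using hr _ (hs v hv)
  · simpa using hr _ (hr _ (hs v hv))

/-- If both generators act by scalars, an irreducible representation is a line. -/
theorem exists_span_singleton_eq_top {V : Type*} [AddCommGroup V] [Module ℚ V] [Nontrivial V]
    (ρ : Representation ℚ (Equiv.Perm (Fin 3)) V)
    (hirr : ∀ U : Submodule ℚ V, (∀ g : Equiv.Perm (Fin 3), ∀ v ∈ U, ρ g v ∈ U) →
      U = ⊥ ∨ U = ⊤)
    {x y : ℚ} (hr : ∀ v, ρ (finRotate 3) v = x • v)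
    (hs : ∀ v, ρ (Equiv.swap 0 1) v = y • v) :
    ∃ v : V, v ≠ 0 ∧ (⊤ : Submodule ℚ V) = Submodule.span ℚ {v} := by
  obtain ⟨v, hv⟩ := exists_ne (0 : V)
  refine ⟨v, hv, ?_⟩
  rcases hirr (Submodule.span ℚ {v}) (stable_of_generators ρ _
    (fun w hw => hr w ▸ Submodule.smul_mem _ _ hw)
    (fun w hw => hs w ▸ Submodule.smul_mem _ _ hw)) with h | h
  · exact absurd (Submodule.span_singleton_eq_bot.1 h) hv
  · exact h.symm

/-- For every irreducible rational representation `ρ` of `S₃` with a `G`-invariant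
positive-definite symmetric bilinear form `B`, the regulator constant
`det((1/6)B|ρ^{S₃})² · det(B|ρ) / (det((1/2)B|ρ^{C₂})² · det((1/3)B|ρ^{C₃}))`,
computed with respect to arbitrary bases of the fixed subspaces, is `3` up to the square
of a nonzero rational number. Here `C₂ = ⟨(0 1)⟩` and `C₃ = ⟨(0 1 2)⟩` inside
`S₃ = Perm (Fin 3)`. -/
theorem regulator_constant_S3
    {V : Type} [AddCommGroup V] [Module ℚ V] [FiniteDimensional ℚ V] [Nontrivial V]
    (ρ : Representation ℚ (Equiv.Perm (Fin 3)) V)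
    (hirr : ∀ U : Submodule ℚ V, (∀ g : Equiv.Perm (Fin 3), ∀ v ∈ U, ρ g v ∈ U) →
      U = ⊥ ∨ U = ⊤)
    (B : V →ₗ[ℚ] V →ₗ[ℚ] ℚ)
    (hBinv : ∀ (g : Equiv.Perm (Fin 3)) (v w : V), B (ρ g v) (ρ g w) = B v w)
    (hBsymm : ∀ v w : V, B v w = B w v)
    (hBpos : ∀ v : V, v ≠ 0 → 0 < B v v)
    {dG dV d2 d3 : ℕ}
    (bG : Module.Basis (Fin dG) ℚ (fixedSubmodule ρ (⊤ : Subgroup (Equiv.Perm (Fin 3)))))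
    (bV : Module.Basis (Fin dV) ℚ V)
    (b2 : Module.Basis (Fin d2) ℚ (fixedSubmodule ρ (Subgroup.zpowers (Equiv.swap (0 : Fin 3) 1))))
    (b3 : Module.Basis (Fin d3) ℚ (fixedSubmodule ρ (Subgroup.zpowers (finRotate 3)))) :
    ∃ q : ℚ, q ≠ 0 ∧
      ((Matrix.of fun a c : Fin dG => (6 : ℚ)⁻¹ * B (bG a : V) (bG c : V)).det) ^ 2 *
          (Matrix.of fun a c : Fin dV => B (bV a) (bV c)).det /
        (((Matrix.of fun a c : Fin d2 => (2 : ℚ)⁻¹ * B (b2 a : V) (b2 c : V)).det) ^ 2 *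
          (Matrix.of fun a c : Fin d3 => (3 : ℚ)⁻¹ * B (b3 a : V) (b3 c : V)).det) =
      3 * q ^ 2 := by
  revert b2 b3
  generalize hr : finRotate 3 = r
  generalize hs : (Equiv.swap 0 1 : Equiv.Perm (Fin 3)) = s
  intro b2 b3
  have hrrr (v : V) : ρ r (ρ r (ρ r v)) = v := by
    rw [← Module.End.mul_apply, ← Module.End.mul_apply, ← map_mul, ← map_mul,
      show r * r * r = 1 by subst hr; decide]
    simp
  have hss (v : V) : ρ s (ρ s v) = v := by
    rw [← Module.End.mul_apply, ← map_mul, show s * s = 1 by subst hs; decide]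
    simp
  have hsr (v : V) : ρ s (ρ r v) = ρ r (ρ r (ρ s v)) := by
    simp only [← Module.End.mul_apply, ← map_mul]
    rw [show s * r = r * r * s by subst hr hs; decide, mul_assoc]
  have hG3 : fixedSubmodule ρ ⊤ ≤ fixedSubmodule ρ (Subgroup.zpowers r) :=
    fun v hv g _ => hv g trivial
  have hG2 : fixedSubmodule ρ ⊤ ≤ fixedSubmodule ρ (Subgroup.zpowers s) :=
    fun v hv g _ => hv g trivial
  have h3stable : ∀ g, ∀ v ∈ fixedSubmodule ρ (Subgroup.zpowers r),
      ρ g v ∈ fixedSubmodule ρ (Subgroup.zpowers r) := by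
    refine stable_of_generators ρ _ (fun v hv => ?_) (fun v hv => ?_)
    · rw [mem_fixedSubmodule_zpowers] at hv ⊢
      rw [hr, hv, hv]
    · rw [mem_fixedSubmodule_zpowers] at hv ⊢
      rw [hs]
      have h := congrArg (ρ r) (hsr v)
      rwa [hv, hrrr] at h
  have hbV {k : ℕ} {v : Fin k → V} (hli : LinearIndependent ℚ v)
      (hsp : (⊤ : Submodule ℚ V) = Submodule.span ℚ (Set.range v)) :
      ∃ q : ℚ, q ≠ 0 ∧ (Matrix.of fun i j => B (bV i) (bV j)).det =
        q ^ 2 * (Matrix.of fun i j => B (v i) (v j)).det := by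
    simpa using exists_sq_mul_det_gram B bV (Basis.mk hli hsp.le)
  have hbV_line {v : V} (hv : v ≠ 0) (hsp : (⊤ : Submodule ℚ V) = Submodule.span ℚ {v}) :
      ∃ q : ℚ, q ≠ 0 ∧ (Matrix.of fun i j => B (bV i) (bV j)).det = q ^ 2 * B v v := by
    have hli : LinearIndependent ℚ ![v] := by
      rw [linearIndependent_unique_iff]
      simpa using hv
    simpa using hbV hli (by simpa using hsp)
  rcases hirr _ h3stable with h3 | h3
  · -- The two-dimensional representation.
    have hsum (v : V) : ρ r (ρ r v) = -v - ρ r v := by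
      have h : v + ρ r v + ρ r (ρ r v) ∈ fixedSubmodule ρ (Subgroup.zpowers r) := by
        rw [mem_fixedSubmodule_zpowers, map_add, map_add, hrrr]
        abel
      rw [h3, Submodule.mem_bot] at h
      rw [← sub_eq_zero, ← h]
      abel
    obtain ⟨v, hsv, hv⟩ : ∃ v : V, ρ s v = v ∧ v ≠ 0 := by
      by_contra! hno
      have hneg (v : V) : ρ s v = -v := by
        have h := hno (v + ρ s v) (by rw [map_add, hss, add_comm])
        exact (neg_eq_of_add_eq_zero_right h).symm
      obtain ⟨w, hw⟩ := exists_ne (0 : V)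
      have h := hsr w
      rw [hneg, hneg, map_neg, map_neg, neg_inj] at h
      have hfix : ρ r w ∈ fixedSubmodule ρ (Subgroup.zpowers r) :=
        (mem_fixedSubmodule_zpowers ρ r _).2 h.symm
      rw [h3, Submodule.mem_bot] at hfix
      have := hrrr w
      simp only [hfix, map_zero] at this
      exact hw this.symm
    have hpos := hBpos v hv
    have hvr : B v (ρ r v) = -(1 / 2) * B v v := by
      have h1 : B v (ρ r (ρ r v)) = B v (ρ r v) := by
        rw [← hBinv r v (ρ r (ρ r v)), hrrr, hBsymm]
      rw [hsum, map_sub, map_neg] at h1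
      linarith
    have hli : LinearIndependent ℚ ![v, ρ r v] := by
      rw [LinearIndependent.pair_iff]
      intro x y hxy
      have h1 := congrArg (B v) hxy
      have h2 := congrArg (B (ρ r v)) hxy
      simp only [map_add, map_smul, smul_eq_mul, map_zero, hBinv, hBsymm (ρ r v) v, hvr] at h1 h2
      have h1' : (2 * x - y) * B v v = 0 := by linarith
      have h2' : (2 * y - x) * B v v = 0 := by linarith
      have e1 := (mul_eq_zero.1 h1').resolve_right hpos.ne'
      have e2 := (mul_eq_zero.1 h2').resolve_right hpos.ne'
      constructor <;> linarith
    have hsp : (⊤ : Submodule ℚ V) = Submodule.span ℚ {v, ρ r v} := by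
      have hmem (x y : ℚ) : x • v + y • ρ r v ∈ Submodule.span ℚ {v, ρ r v} :=
        Submodule.mem_span_pair.2 ⟨x, y, rfl⟩
      have hstable := stable_of_generators ρ (Submodule.span ℚ {v, ρ r v})
        (fun w hw => by
          obtain ⟨x, y, rfl⟩ := Submodule.mem_span_pair.1 hw
          rw [hr, map_add, map_smul, map_smul, hsum]
          convert hmem (-y) (x - y) using 1
          module)
        (fun w hw => by
          obtain ⟨x, y, rfl⟩ := Submodule.mem_span_pair.1 hw
          rw [hs, map_add, map_smul, map_smul, hsr, hsv, hsum]
          convert hmem (x - y) (-y) using 1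
          module)
      rcases hirr _ hstable with h | h
      · exact absurd ((Submodule.mem_bot ℚ).1 (h ▸ Submodule.subset_span (by simp))) hv
      · exact h.symm
    have h2 : fixedSubmodule ρ (Subgroup.zpowers s) = Submodule.span ℚ {v} := by
      ext w
      rw [mem_fixedSubmodule_zpowers, Submodule.mem_span_singleton]
      constructor
      · intro hw
        obtain ⟨x, y, rfl⟩ := Submodule.mem_span_pair.1 (hsp ▸ Submodule.mem_top : w ∈ _)
        rw [map_add, map_smul, map_smul, hsr, hsv, hsum] at hw
        have h0 : y • v + (2 * y) • ρ r v = 0 := by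
          rw [← sub_eq_zero] at hw
          rw [← neg_eq_zero, ← hw]
          module
        have hy := (LinearIndependent.pair_iff.1 hli _ _ h0).1
        exact ⟨x, by simp [hy]⟩
      · rintro ⟨x, rfl⟩
        rw [map_smul, hsv]
    obtain ⟨p, hp, hpV⟩ := hbV hli (by simpa [Set.pair_comm] using hsp)
    obtain ⟨q, hq, hq2⟩ := exists_sq_mul_det_gram_of_span_singleton B 2⁻¹ b2 hv h2
    rw [det_gram_of_eq_bot B _ bG (le_bot_iff.1 (h3 ▸ hG3)), det_gram_of_eq_bot B _ b3 h3, hpV,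
      hq2, Matrix.det_fin_two]
    refine ⟨p / q ^ 2, by positivity, ?_⟩
    simp [hBinv, hBsymm (ρ r v) v, hvr]
    field_simp
    ring
  · have hr1 (v : V) : ρ r v = v :=
      (mem_fixedSubmodule_zpowers ρ r v).1 (h3 ▸ Submodule.mem_top)
    have h2stable : ∀ g, ∀ v ∈ fixedSubmodule ρ (Subgroup.zpowers s),
        ρ g v ∈ fixedSubmodule ρ (Subgroup.zpowers s) := by
      refine stable_of_generators ρ _ (fun v hv => ?_) (fun v hv => ?_)
      · rwa [hr, hr1]
      · rwa [hs, (mem_fixedSubmodule_zpowers ρ s v).1 hv]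
    rcases hirr _ h2stable with h2 | h2
    · -- The sign representation.
      have hs1 (v : V) : ρ s v = -v := by
        have h : v + ρ s v ∈ fixedSubmodule ρ (Subgroup.zpowers s) := by
          rw [mem_fixedSubmodule_zpowers, map_add, hss, add_comm]
        rw [h2, Submodule.mem_bot] at h
        exact (neg_eq_of_add_eq_zero_right h).symm
      obtain ⟨v, hv, hsp⟩ := exists_span_singleton_eq_top ρ hirr (x := 1) (y := -1)
        (by simpa [hr] using hr1) (by simpa [hs] using hs1)
      have hpos := hBpos v hv
      obtain ⟨p, hp, hpV⟩ := hbV_line hv hsp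
      obtain ⟨q, hq, hq3⟩ :=
        exists_sq_mul_det_gram_of_span_singleton B 3⁻¹ b3 hv (h3.trans hsp)
      rw [det_gram_of_eq_bot B _ bG (le_bot_iff.1 (h2 ▸ hG2)), det_gram_of_eq_bot B _ b2 h2, hpV,
        hq3]
      refine ⟨p / q, by positivity, ?_⟩
      field_simp
    · -- The trivial representation.
      have hs1 (v : V) : ρ s v = v :=
        (mem_fixedSubmodule_zpowers ρ s v).1 (h2 ▸ Submodule.mem_top)
      have hG : fixedSubmodule ρ ⊤ = ⊤ := by
        refine eq_top_iff.2 fun v _ g _ => ?_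
        rcases perm_fin_three_cases g with rfl | rfl | rfl | rfl | rfl | rfl <;>
          simp [hr, hs, hr1, hs1]
      obtain ⟨v, hv, hsp⟩ := exists_span_singleton_eq_top ρ hirr (x := 1) (y := 1)
        (by simpa [hr] using hr1) (by simpa [hs] using hs1)
      have hpos := hBpos v hv
      obtain ⟨p, hp, hpV⟩ := hbV_line hv hsp
      obtain ⟨t, ht, htG⟩ :=
        exists_sq_mul_det_gram_of_span_singleton B 6⁻¹ bG hv (hG.trans hsp)
      obtain ⟨u, hu, hu2⟩ :=
        exists_sq_mul_det_gram_of_span_singleton B 2⁻¹ b2 hv (h2.trans hsp)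
      obtain ⟨q, hq, hq3⟩ :=
        exists_sq_mul_det_gram_of_span_singleton B 3⁻¹ b3 hv (h3.trans hsp)
      rw [htG, hpV, hu2, hq3]
      refine ⟨t ^ 2 * p / (3 * u ^ 2 * q), by positivity, ?_⟩
      field_simp
      norm_num
end

section
/- Let p be an odd prime, let G be the group of affine permutations of 𝔽_p (all maps x ↦ ax + b with a ∈ 𝔽_p^*, b ∈ 𝔽_p, under composition), and let T ≤ G be the stabilizer of 0. Let V = { f : 𝔽_p → ℚ : Σ_{x ∈ 𝔽_p} f(x) = 0 } with G acting by (σ·f)(x) = f(σ^{-1}(x)). Then the fixed space V^{T} is one-dimensional, and for every G-invariant positive-definite symmetric ℚ-valued bilinear form B on V, any ℚ-basis e₁,…,e_{p−1} of V, and any nonzero w ∈ V^{T}, the quantity det(B(eᵢ,eⱼ))ᵢⱼ / ( B(w,w)/(p−1) )^{p−1} equals p·q² for some nonzero rational number q. -/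
/-- The group of affine permutations `x ↦ ax + b` (with `a ≠ 0`) of `𝔽_p`, as a subgroup of
the permutation group of `ZMod p`. -/
def affineGroup (p : ℕ) [Fact p.Prime] : Subgroup (Equiv.Perm (ZMod p)) where
  carrier := {σ | ∃ a b : ZMod p, a ≠ 0 ∧ ∀ x, σ x = a * x + b}
  one_mem' := ⟨1, 0, one_ne_zero, fun x => by simp⟩
  mul_mem' := by
    rintro σ τ ⟨a, b, ha, hσ⟩ ⟨c, d, hc, hτ⟩
    refine ⟨a * c, a * d + b, mul_ne_zero ha hc, fun x => ?_⟩
    rw [Equiv.Perm.mul_apply, hτ, hσ]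
    ring
  inv_mem' := by
    rintro σ ⟨a, b, ha, hσ⟩
    refine ⟨a⁻¹, -(a⁻¹ * b), inv_ne_zero ha, fun x => ?_⟩
    have h : σ (a⁻¹ * x + -(a⁻¹ * b)) = x := by
      rw [hσ]
      field_simp
      ring
    calc σ⁻¹ x = σ⁻¹ (σ (a⁻¹ * x + -(a⁻¹ * b))) := by rw [h]
      _ = a⁻¹ * x + -(a⁻¹ * b) := Equiv.symm_apply_apply σ _

/-- The stabilizer of `0` in the affine group: the maps `x ↦ ax`. -/
def affineStab (p : ℕ) [Fact p.Prime] : Subgroup (affineGroup p) where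
  carrier := {σ | (σ : Equiv.Perm (ZMod p)) 0 = 0}
  one_mem' := rfl
  mul_mem' := by
    intro σ τ hσ hτ
    show ((σ * τ : affineGroup p) : Equiv.Perm (ZMod p)) 0 = 0
    rw [Subgroup.coe_mul, Equiv.Perm.mul_apply, hτ, hσ]
  inv_mem' := by
    intro σ hσ
    show ((σ⁻¹ : affineGroup p) : Equiv.Perm (ZMod p)) 0 = 0
    rw [Subgroup.coe_inv]
    conv_lhs => rw [← hσ]
    exact Equiv.symm_apply_apply (σ : Equiv.Perm (ZMod p)) _

/-- The space of mean-zero rational-valued functions on `𝔽_p`. -/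
def meanZero (p : ℕ) [Fact p.Prime] : Submodule ℚ (ZMod p → ℚ) where
  carrier := {f | ∑ x, f x = 0}
  add_mem' := by
    intro a b ha hb
    simp only [Set.mem_setOf_eq] at *
    simp [Finset.sum_add_distrib, ha, hb]
  zero_mem' := by simp
  smul_mem' := by
    intro c f hf
    simp only [Set.mem_setOf_eq] at *
    simp [Pi.smul_apply, ← Finset.mul_sum, hf]

/-- The representation of the affine group of `𝔽_p` on mean-zero rational functions on
`𝔽_p`, by `(σ·f)(x) = f(σ⁻¹ x)`. -/
noncomputable def meanZeroRep (p : ℕ) [Fact p.Prime] :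
    Representation ℚ (affineGroup p) (meanZero p) where
  toFun σ :=
    { toFun := fun f => ⟨fun x => (f : ZMod p → ℚ) (((σ⁻¹ : affineGroup p) :
          Equiv.Perm (ZMod p)) x), by
        have h := Equiv.sum_comp (((σ⁻¹ : affineGroup p) : Equiv.Perm (ZMod p)))
          (f : ZMod p → ℚ)
        exact h.trans f.2⟩
      map_add' := fun f g => rfl
      map_smul' := fun c f => rfl }
  map_one' := by
    ext f x
    simp
  map_mul' := by
    intro σ τ
    ext f x
    simp [mul_inv_rev, Equiv.Perm.mul_apply]

open Matrix in
/-- If `m + 1` is the number of points, the Gram determinant of `m` mean-zero functions for the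
standard dot product is `m + 1` times a rational square. -/
theorem exists_det_dotProduct_eq_card_mul_sq {ι X : Type*} [Fintype ι] [DecidableEq ι] [Fintype X]
    (hcard : Fintype.card ι + 1 = Fintype.card X) (f : ι → X → ℚ) (hf : ∀ i, ∑ x, f i x = 0) :
    ∃ d : ℚ, (Matrix.of fun i j => ∑ x, f i x * f j x).det = Fintype.card X * d ^ 2 := by
  have hX : (Fintype.card X : ℚ) ≠ 0 := by
    rw [← hcard]; positivity
  let φ : ι ⊕ Unit ≃ X := Fintype.equivOfCardEq (by simpa using hcard)
  let N : Matrix (ι ⊕ Unit) (ι ⊕ Unit) ℚ := .of fun i j => Sum.elim f (fun _ _ => 1) i (φ j)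
  have hN : N * Nᵀ = fromBlocks (.of fun i j => ∑ x, f i x * f j x) 0 0
      (diagonal fun _ => (Fintype.card X : ℚ)) := by
    have key : ∀ i j, (N * Nᵀ) i j =
        ∑ x, Sum.elim f (fun _ _ => 1) i x * Sum.elim f (fun _ _ => 1) j x := fun i j =>
      φ.sum_comp fun x => Sum.elim f (fun _ _ => 1) i x * Sum.elim f (fun _ _ => 1) j x
    ext i j
    rw [key]
    rcases i with i | i <;> rcases j with j | j <;> simp [hf]
  have hdet := congrArg det hN
  rw [det_mul, det_transpose, det_fromBlocks_zero₂₁, det_diagonal] at hdet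
  simp only [Finset.univ_unique, Finset.prod_const, Finset.card_singleton, pow_one] at hdet
  refine ⟨N.det / Fintype.card X, ?_⟩
  field_simp
  rw [← hdet]
  ring

section

variable {p : ℕ} [Fact p.Prime]

theorem mem_meanZero {f : ZMod p → ℚ} : f ∈ meanZero p ↔ ∑ x, f x = 0 := Iff.rfl

/-- The mean-zero function `p δ_x - 1`. -/
def centeredDelta (x : ZMod p) : meanZero p :=
  ⟨fun y => p * (if x = y then 1 else 0) - 1, by
    simp [mem_meanZero, Finset.sum_sub_distrib, ZMod.card]⟩

theorem centeredDelta_apply (x y : ZMod p) :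
    (centeredDelta x : ZMod p → ℚ) y = p * (if x = y then 1 else 0) - 1 := rfl

theorem centeredDelta_ne_zero (x : ZMod p) : centeredDelta x ≠ 0 := fun h => by
  have h1 : (centeredDelta x : ZMod p → ℚ) (x + 1) = 0 := by rw [h]; rfl
  simp [centeredDelta_apply] at h1

theorem meanZeroRep_apply (σ : affineGroup p) (f : meanZero p) (x : ZMod p) :
    (meanZeroRep p σ f : ZMod p → ℚ) x = (f : ZMod p → ℚ) ((σ : Equiv.Perm (ZMod p))⁻¹ x) := rfl

theorem meanZeroRep_centeredDelta (σ : affineGroup p) (x : ZMod p) :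
    meanZeroRep p σ (centeredDelta x) = centeredDelta ((σ : Equiv.Perm (ZMod p)) x) := by
  ext y
  rw [meanZeroRep_apply, centeredDelta_apply, centeredDelta_apply]
  simp only [Equiv.Perm.eq_inv_iff_eq]

theorem sum_smul_centeredDelta (f : meanZero p) :
    ∑ x, (f : ZMod p → ℚ) x • centeredDelta x = (p : ℚ) • f := by
  ext y
  have hf : ∑ x, (f : ZMod p → ℚ) x = 0 := f.2
  simp [Finset.sum_apply, centeredDelta_apply, mul_sub, Finset.sum_sub_distrib, hf,
    mul_comm (p : ℚ)]

/-- The affine permutation `z ↦ a z + b`. -/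
def affinePerm (a b : ZMod p) (ha : a ≠ 0) : affineGroup p :=
  ⟨(Equiv.mulLeft₀ a ha).trans (Equiv.addRight b), a, b, ha, fun _ => rfl⟩

theorem affinePerm_apply (a b : ZMod p) (ha : a ≠ 0) (x : ZMod p) :
    (affinePerm a b ha : Equiv.Perm (ZMod p)) x = a * x + b := rfl

theorem finrank_fixedSubmodule_affineStab :
    Module.finrank ℚ (fixedSubmodule (meanZeroRep p) (affineStab p)) = 1 := by
  have hmem : centeredDelta 0 ∈ fixedSubmodule (meanZeroRep p) (affineStab p) := by
    intro σ hσ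
    have hσ' : (σ : Equiv.Perm (ZMod p)) 0 = 0 := hσ
    rw [meanZeroRep_centeredDelta, hσ']
  refine finrank_eq_one (R := ℚ) (⟨_, hmem⟩ : fixedSubmodule (meanZeroRep p) (affineStab p)) ?_ ?_
  · exact fun h => centeredDelta_ne_zero 0 (congrArg Subtype.val h)
  rintro ⟨f, hf⟩
  have hconst : ∀ x ≠ 0, (f : ZMod p → ℚ) x = (f : ZMod p → ℚ) 1 := fun x hx => by
    have hfix := hf (affinePerm x 0 hx) (show x * 0 + 0 = 0 by simp)
    have hinv : (affinePerm x 0 hx : Equiv.Perm (ZMod p))⁻¹ x = 1 := by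
      rw [Equiv.Perm.inv_eq_iff_eq, affinePerm_apply]
      simp
    rw [← hinv, ← meanZeroRep_apply, hfix]
  have hsum : (f : ZMod p → ℚ) 0 + (p - 1) * (f : ZMod p → ℚ) 1 = 0 := by
    have h0 : ∑ x, (f : ZMod p → ℚ) x = 0 := f.2
    rw [← Finset.add_sum_erase _ _ (Finset.mem_univ 0),
      Finset.sum_congr rfl fun x hx => hconst x (Finset.ne_of_mem_erase hx)] at h0
    simpa [Finset.card_erase_of_mem, ZMod.card, Nat.cast_sub (Fact.out : p.Prime).one_le] using h0
  refine ⟨-(f : ZMod p → ℚ) 1, Subtype.ext <| Subtype.ext <| funext fun x => ?_⟩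
  change -(f : ZMod p → ℚ) 1 * (centeredDelta (0 : ZMod p) : ZMod p → ℚ) x =
      (f : ZMod p → ℚ) x
  rw [centeredDelta_apply]
  by_cases hx : x = 0
  · subst hx
    simp only [if_true]
    linarith
  · rw [hconst x hx, if_neg (Ne.symm hx)]
    ring

/-- An invariant bilinear form on the mean-zero functions is a multiple of the dot product. -/
theorem exists_eq_mul_dotProduct_of_invariant (B : meanZero p →ₗ[ℚ] meanZero p →ₗ[ℚ] ℚ)
    (hB : ∀ (g : affineGroup p) (v w : meanZero p),
      B (meanZeroRep p g v) (meanZeroRep p g w) = B v w) :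
    ∃ k : ℚ, ∀ f g : meanZero p,
      B f g = k * ∑ x, (f : ZMod p → ℚ) x * (g : ZMod p → ℚ) x := by
  set a := B (centeredDelta 0) (centeredDelta 0) with ha
  set b := B (centeredDelta 0) (centeredDelta 1) with hb
  have hdelta : ∀ x y, B (centeredDelta x) (centeredDelta y) =
      b + (a - b) * if x = y then 1 else 0 := fun x y => by
    by_cases hxy : x = y
    · subst hxy
      rw [if_pos rfl, ha, ← hB (affinePerm 1 x one_ne_zero) (centeredDelta 0) (centeredDelta 0)]
      simp only [meanZeroRep_centeredDelta, affinePerm_apply, mul_zero, zero_add]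
      ring
    · rw [if_neg hxy, hb, ← hB (affinePerm (y - x) x (sub_ne_zero.2 (Ne.symm hxy)))
        (centeredDelta 0) (centeredDelta 1)]
      simp [meanZeroRep_centeredDelta, affinePerm_apply]
  have hp : (p : ℚ) ≠ 0 := Nat.cast_ne_zero.2 (Fact.out : p.Prime).ne_zero
  refine ⟨(a - b) / (p : ℚ) ^ 2, fun f g => ?_⟩
  have hg : ∑ x, (g : ZMod p → ℚ) x = 0 := g.2
  have hfg : (p : ℚ) ^ 2 * B f g = (a - b) * ∑ x, (f : ZMod p → ℚ) x * (g : ZMod p → ℚ) x :=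
    calc (p : ℚ) ^ 2 * B f g = B ((p : ℚ) • f) ((p : ℚ) • g) := by
          simp only [map_smul, LinearMap.smul_apply, smul_eq_mul]; ring
      _ = ∑ x, (f : ZMod p → ℚ) x * ∑ y, (g : ZMod p → ℚ) y *
            (b + (a - b) * if x = y then 1 else 0) := by
          rw [← sum_smul_centeredDelta f, ← sum_smul_centeredDelta g]
          simp only [map_sum, map_smul, LinearMap.sum_apply, LinearMap.smul_apply, smul_eq_mul,
            hdelta]
          simp only [Finset.mul_sum]
          rw [Finset.sum_comm]
          exact Finset.sum_congr rfl fun x _ => Finset.sum_congr rfl fun y _ => by ring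
      _ = (a - b) * ∑ x, (f : ZMod p → ℚ) x * (g : ZMod p → ℚ) x := by
          simp only [mul_add, Finset.sum_add_distrib, ← Finset.sum_mul, hg, zero_mul, zero_add,
            mul_ite, mul_one, mul_zero, Finset.sum_ite_eq, Finset.mem_univ, if_true]
          rw [Finset.mul_sum]
          exact Finset.sum_congr rfl fun x _ => by ring
  field_simp
  linarith

end

/-- With `G` the affine group of `𝔽_p`, `T` the stabilizer of `0` and `V` the mean-zero
rational functions on `𝔽_p`: the fixed space `V^T` is one-dimensional, and for every
`G`-invariant positive-definite symmetric bilinear form `B` on `V`, every basis `e` of `V`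
and every nonzero `w ∈ V^T`, the quantity `det(B(eᵢ,eⱼ)) / (B(w,w)/(p−1))^{p−1}` is `p`
times a nonzero rational square. -/
theorem regulator_constant_affineGroup (p : ℕ) [Fact p.Prime] (hodd : Odd p) :
    Module.finrank ℚ (fixedSubmodule (meanZeroRep p) (affineStab p)) = 1 ∧
    ∀ B : (meanZero p) →ₗ[ℚ] (meanZero p) →ₗ[ℚ] ℚ,
      (∀ (g : affineGroup p) (v w : meanZero p),
        B (meanZeroRep p g v) (meanZeroRep p g w) = B v w) →
      (∀ v w : meanZero p, B v w = B w v) →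
      (∀ v : meanZero p, v ≠ 0 → 0 < B v v) →
      ∀ e : Module.Basis (Fin (p - 1)) ℚ (meanZero p),
      ∀ w : meanZero p, w ∈ fixedSubmodule (meanZeroRep p) (affineStab p) → w ≠ 0 →
      ∃ q : ℚ, q ≠ 0 ∧
        (Matrix.of fun i j => B (e i) (e j)).det / (B w w / ((p : ℚ) - 1)) ^ (p - 1) =
          p * q ^ 2 := by
  refine ⟨finrank_fixedSubmodule_affineStab, fun B hB _ hpos e w _ hw => ?_⟩
  have hprime : p.Prime := Fact.out
  obtain ⟨k, hk⟩ := exists_eq_mul_dotProduct_of_invariant B hB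
  obtain ⟨d, hd⟩ := exists_det_dotProduct_eq_card_mul_sq
    (by simp [ZMod.card, Nat.sub_add_cancel hprime.one_le])
    (fun i => (e i : ZMod p → ℚ)) fun i => (e i).2
  have hgram : (Matrix.of fun i j => B (e i) (e j)) =
      k • Matrix.of fun i j => ∑ x, (e i : ZMod p → ℚ) x * (e j : ZMod p → ℚ) x := by
    ext i j
    simp [hk]
  have hdet : (Matrix.of fun i j => B (e i) (e j)).det ≠ 0 := by
    have hsep : B.SeparatingLeft := fun v hv => by
      by_contra hv0
      exact (hpos v hv0).ne' (hv v)
    have h := (LinearMap.separatingLeft_iff_det_ne_zero e).1 hsep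
    convert h using 2
    ext i j
    simp [LinearMap.toMatrix₂_apply]
  obtain ⟨m, hm⟩ : ∃ m, p - 1 = 2 * m := by
    obtain ⟨m, hm⟩ := hodd
    exact ⟨m, by omega⟩
  have hs : B w w / ((p : ℚ) - 1) ≠ 0 :=
    div_ne_zero (hpos w hw).ne' (sub_ne_zero.2 (by exact_mod_cast hprime.ne_one))
  set s := B w w / ((p : ℚ) - 1)
  have heq : (Matrix.of fun i j => B (e i) (e j)).det / s ^ (p - 1) =
      p * (k ^ m * d / s ^ m) ^ 2 := by
    rw [hgram, Matrix.det_smul, hd, Fintype.card_fin, ZMod.card, hm]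
    field_simp
    ring
  refine ⟨k ^ m * d / s ^ m, fun hq => ?_, heq⟩
  rw [hq] at heq
  exact div_ne_zero hdet (pow_ne_zero _ hs) (by simpa using heq)
end

section
/- Let G = A₅ be the alternating group on {1,2,3,4,5}, let C₂ = ⟨(1 2)(3 4)⟩ and let V₄ = {id, (1 2)(3 4), (1 3)(2 4), (1 4)(2 3)} be the Klein four-subgroup. Then there is an isomorphism of complex representations of A₅: ℂ[G/1] ⊕ (ℂ[G/V₄])^{⊕2} ≅ (ℂ[G/C₂])^{⊕3}. -/
namespace Stmt13

/-- `(0 1)(2 3)` as an element of `A₅`. -/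
def a : alternatingGroup (Fin 5) :=
  ⟨Equiv.swap 0 1 * Equiv.swap 2 3, by
    rw [Equiv.Perm.mem_alternatingGroup, map_mul,
      Equiv.Perm.sign_swap (by decide), Equiv.Perm.sign_swap (by decide)]
    decide⟩

/-- `(0 2)(1 3)` as an element of `A₅`. -/
def b : alternatingGroup (Fin 5) :=
  ⟨Equiv.swap 0 2 * Equiv.swap 1 3, by
    rw [Equiv.Perm.mem_alternatingGroup, map_mul,
      Equiv.Perm.sign_swap (by decide), Equiv.Perm.sign_swap (by decide)]
    decide⟩

/-- `(0 3)(1 2)` as an element of `A₅`. -/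
def c : alternatingGroup (Fin 5) :=
  ⟨Equiv.swap 0 3 * Equiv.swap 1 2, by
    rw [Equiv.Perm.mem_alternatingGroup, map_mul,
      Equiv.Perm.sign_swap (by decide), Equiv.Perm.sign_swap (by decide)]
    decide⟩

/-- The subgroup `C₂ = ⟨(0 1)(2 3)⟩` of `A₅`. -/
def C2 : Subgroup (alternatingGroup (Fin 5)) := Subgroup.zpowers a

/-- The Klein four-subgroup `V₄ = {1, (0 1)(2 3), (0 2)(1 3), (0 3)(1 2)}` of `A₅`. -/
def V4 : Subgroup (alternatingGroup (Fin 5)) where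
  carrier := {x | x = 1 ∨ x = a ∨ x = b ∨ x = c}
  one_mem' := Or.inl rfl
  mul_mem' := by
    intro x y hx hy
    simp only [Set.mem_setOf_eq] at *
    rcases hx with h | h | h | h <;> rcases hy with h' | h' | h' | h' <;>
      subst h <;> subst h' <;>
      first
        | exact Or.inl (by ext1; decide)
        | exact Or.inr (Or.inl (by ext1; decide))
        | exact Or.inr (Or.inr (Or.inl (by ext1; decide)))
        | exact Or.inr (Or.inr (Or.inr (by ext1; decide)))
  inv_mem' := by
    intro x hx
    simp only [Set.mem_setOf_eq] at *
    rcases hx with h | h | h | h <;> subst h <;>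
      first
        | exact Or.inl (by ext1; decide)
        | exact Or.inr (Or.inl (by ext1; decide))
        | exact Or.inr (Or.inr (Or.inl (by ext1; decide)))
        | exact Or.inr (Or.inr (Or.inr (by ext1; decide)))

/-- The 3-cycle `(1 2 3)`, which conjugates `a` to `b` and `b` to `c`. -/
def t : alternatingGroup (Fin 5) :=
  ⟨Equiv.swap 1 2 * Equiv.swap 2 3, by
    rw [Equiv.Perm.mem_alternatingGroup, map_mul,
      Equiv.Perm.sign_swap (by decide), Equiv.Perm.sign_swap (by decide)]
    decide⟩

theorem a_mul_a : a * a = 1 := by ext1; decide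
theorem a_mul_b : a * b = c := by ext1; decide
theorem a_mul_c : a * c = b := by ext1; decide
theorem b_mul_a : b * a = c := by ext1; decide
theorem b_mul_b : b * b = 1 := by ext1; decide
theorem b_mul_c : b * c = a := by ext1; decide
theorem c_mul_a : c * a = b := by ext1; decide
theorem c_mul_b : c * b = a := by ext1; decide
theorem c_mul_c : c * c = 1 := by ext1; decide
theorem b_mul_t : b * t = t * a := by ext1; decide
theorem c_mul_t_sq : c * t ^ 2 = t ^ 2 * a := by ext1; decide

theorem card_C2 : Nat.card C2 = 2 := by
  rw [C2, Nat.card_zpowers]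
  exact orderOf_eq_prime (by rw [sq, a_mul_a]) (fun h => absurd (congrArg Subtype.val h) (by decide))

theorem card_V4 : Nat.card V4 = 4 := by
  have h : (V4 : Set (alternatingGroup (Fin 5))) = (({1, a, b, c} : Finset _) : Set _) := by
    ext x
    simp [V4]
  rw [← SetLike.coe_sort_coe, h, Nat.card_coe_set_eq, Set.ncard_coe_finset]
  decide

theorem card_A5 : Nat.card (alternatingGroup (Fin 5)) = 60 := by
  rw [nat_card_alternatingGroup]
  simp [Nat.factorial]

theorem card_quotient_C2 : Nat.card (alternatingGroup (Fin 5) ⧸ C2) = 30 := by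
  have h := C2.card_eq_card_quotient_mul_card_subgroup
  rw [card_A5, card_C2] at h
  omega

theorem card_quotient_V4 : Nat.card (alternatingGroup (Fin 5) ⧸ V4) = 15 := by
  have h := V4.card_eq_card_quotient_mul_card_subgroup
  rw [card_A5, card_V4] at h
  omega

theorem card_quotient_bot :
    Nat.card (alternatingGroup (Fin 5) ⧸ (⊥ : Subgroup (alternatingGroup (Fin 5)))) = 60 := by
  have h := (⊥ : Subgroup (alternatingGroup (Fin 5))).card_eq_card_quotient_mul_card_subgroup
  rw [card_A5, Subgroup.card_bot] at h
  omega

/-- The basis vector of `ℂ[G/C₂]^{⊕3}` at the coset `g tⁱ C₂` of the `i`-th summand. -/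
noncomputable def cosetVec (i : Fin 3) (g : alternatingGroup (Fin 5)) :
    (Σ _ : Fin 3, alternatingGroup (Fin 5) ⧸ C2) →₀ ℂ :=
  Finsupp.single ⟨i, ((g * t ^ (i : ℕ) : alternatingGroup (Fin 5)) : _ ⧸ C2)⟩ 1

theorem cosetVec_mul_eq {i : Fin 3} {x : alternatingGroup (Fin 5)}
    (hx : x * t ^ (i : ℕ) = t ^ (i : ℕ) * a) (g : alternatingGroup (Fin 5)) :
    cosetVec i (g * x) = cosetVec i g := by
  have h : ((g * x * t ^ (i : ℕ) : alternatingGroup (Fin 5)) : _ ⧸ C2) =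
      ((g * t ^ (i : ℕ) : alternatingGroup (Fin 5)) : _ ⧸ C2) := by
    rw [mul_assoc, hx, ← mul_assoc]
    exact QuotientGroup.mk_mul_of_mem _ (Subgroup.mem_zpowers a)
  rw [cosetVec, h, cosetVec]

theorem cosetVec_zero_mul_a (g : alternatingGroup (Fin 5)) :
    cosetVec 0 (g * a) = cosetVec 0 g :=
  cosetVec_mul_eq (by simp) g

theorem cosetVec_one_mul_b (g : alternatingGroup (Fin 5)) :
    cosetVec 1 (g * b) = cosetVec 1 g :=
  cosetVec_mul_eq (by simpa using b_mul_t) g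

theorem cosetVec_two_mul_c (g : alternatingGroup (Fin 5)) :
    cosetVec 2 (g * c) = cosetVec 2 g :=
  cosetVec_mul_eq c_mul_t_sq g

/-- The sum of `cosetVec i` over the coset `g V₄`. -/
noncomputable def sumV4 (i : Fin 3) (g : alternatingGroup (Fin 5)) :
    (Σ _ : Fin 3, alternatingGroup (Fin 5) ⧸ C2) →₀ ℂ :=
  cosetVec i g + cosetVec i (g * a) + cosetVec i (g * b) + cosetVec i (g * c)

theorem sumV4_mul_of_mem (i : Fin 3) (g : alternatingGroup (Fin 5))
    {v : alternatingGroup (Fin 5)} (hv : v ∈ V4) : sumV4 i (g * v) = sumV4 i g := by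
  have hv' : v = 1 ∨ v = a ∨ v = b ∨ v = c := hv
  rcases hv' with rfl | rfl | rfl | rfl <;>
    simp only [sumV4, mul_assoc, a_mul_a, a_mul_b, a_mul_c, b_mul_a, b_mul_b, b_mul_c, c_mul_a,
      c_mul_b, c_mul_c, mul_one] <;> abel

/-- The image of a coset of the trivial subgroup. -/
noncomputable def imageBot
    (q : alternatingGroup (Fin 5) ⧸ (⊥ : Subgroup (alternatingGroup (Fin 5)))) :
    (Σ _ : Fin 3, alternatingGroup (Fin 5) ⧸ C2) →₀ ℂ :=
  Quotient.liftOn' q (fun g => ∑ i, cosetVec i g) (by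
    intro g h hgh
    rw [QuotientGroup.leftRel_apply, Subgroup.mem_bot, inv_mul_eq_one] at hgh
    rw [hgh])

/-- The image of a coset of `V₄` in the `k`-th summand. -/
noncomputable def imageV4 (k : Fin 2) (q : alternatingGroup (Fin 5) ⧸ V4) :
    (Σ _ : Fin 3, alternatingGroup (Fin 5) ⧸ C2) →₀ ℂ :=
  Quotient.liftOn' q (fun g => sumV4 k.castSucc g - sumV4 k.succ g) (by
    intro g h hgh
    rw [QuotientGroup.leftRel_apply] at hgh
    have hs (i : Fin 3) : sumV4 i h = sumV4 i g := by
      simpa using sumV4_mul_of_mem i g hgh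
    simp only [hs])

/-- The intertwining map `ℂ[G/1] ⊕ ℂ[G/V₄]^{⊕2} → ℂ[G/C₂]^{⊕3}`. -/
noncomputable def relationMap :
    (((alternatingGroup (Fin 5) ⧸ (⊥ : Subgroup (alternatingGroup (Fin 5)))) ⊕
      (Σ _ : Fin 2, alternatingGroup (Fin 5) ⧸ V4)) →₀ ℂ) →ₗ[ℂ]
    ((Σ _ : Fin 3, alternatingGroup (Fin 5) ⧸ C2) →₀ ℂ) :=
  Finsupp.linearCombination ℂ (Sum.elim imageBot fun p => imageV4 p.1 p.2)

theorem sum_cosetVec_mem_range (g : alternatingGroup (Fin 5)) :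
    cosetVec 0 g + cosetVec 1 g + cosetVec 2 g ∈ LinearMap.range relationMap :=
  ⟨Finsupp.single (Sum.inl (g : _ ⧸ _)) 1, by
    rw [relationMap, Finsupp.linearCombination_single, one_smul]
    exact Fin.sum_univ_three fun i => cosetVec i g⟩

theorem sumV4_sub_mem_range (k : Fin 2) (g : alternatingGroup (Fin 5)) :
    sumV4 k.castSucc g - sumV4 k.succ g ∈ LinearMap.range relationMap :=
  ⟨Finsupp.single (Sum.inr ⟨k, (g : _ ⧸ _)⟩) 1, by
    rw [relationMap, Finsupp.linearCombination_single, one_smul]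
    rfl⟩

theorem cosetVec_mem_range (i : Fin 3) (g : alternatingGroup (Fin 5)) :
    cosetVec i g ∈ LinearMap.range relationMap := by
  obtain ⟨u₁, h₁⟩ := sum_cosetVec_mem_range g
  obtain ⟨ua, ha⟩ := sum_cosetVec_mem_range (g * a)
  obtain ⟨ub, hb⟩ := sum_cosetVec_mem_range (g * b)
  obtain ⟨uc, hc⟩ := sum_cosetVec_mem_range (g * c)
  obtain ⟨w₀, h₀⟩ := sumV4_sub_mem_range 0 g
  obtain ⟨w₁, h₁'⟩ := sumV4_sub_mem_range 1 g
  have e₀ : cosetVec 0 (g * c) = cosetVec 0 (g * b) := by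
    rw [← b_mul_a, ← mul_assoc, cosetVec_zero_mul_a]
  have e₁ : cosetVec 1 (g * c) = cosetVec 1 (g * a) := by
    rw [← a_mul_b, ← mul_assoc, cosetVec_one_mul_b]
  have e₂ : cosetVec 2 (g * b) = cosetVec 2 (g * a) := by
    rw [← a_mul_c, ← mul_assoc, cosetVec_two_mul_c]
  simp only [Fin.castSucc_zero, Fin.succ_zero_eq_one, Fin.castSucc_one, Fin.succ_one_eq_two,
    sumV4, e₀, e₁, e₂, cosetVec_zero_mul_a, cosetVec_one_mul_b, cosetVec_two_mul_c]
    at h₁ ha hb hc h₀ h₁'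
  fin_cases i
  · refine ⟨(1 / 4 : ℂ) • (u₁ + ua - ub - uc) +
      (1 / 12 : ℂ) • (u₁ + ua + ub + uc + (2 : ℂ) • w₀ + w₁), ?_⟩
    simp only [map_add, map_sub, map_smul, h₁, ha, hb, hc, h₀, h₁', Fin.zero_eta]
    module
  · refine ⟨(1 / 4 : ℂ) • (u₁ + ub - ua - uc) +
      (1 / 12 : ℂ) • (u₁ + ua + ub + uc - w₀ + w₁), ?_⟩
    simp only [map_add, map_sub, map_smul, h₁, ha, hb, hc, h₀, h₁', Fin.mk_one]
    module
  · refine ⟨(1 / 4 : ℂ) • (u₁ + uc - ua - ub) +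
      (1 / 12 : ℂ) • (u₁ + ua + ub + uc - w₀ - (2 : ℂ) • w₁), ?_⟩
    simp only [map_add, map_sub, map_smul, h₁, ha, hb, hc, h₀, h₁', Fin.reduceFinMk]
    module

theorem relationMap_surjective : Function.Surjective relationMap := by
  intro y
  change y ∈ LinearMap.range relationMap
  induction y using Finsupp.induction_linear with
  | zero => exact zero_mem _
  | add u v hu hv => exact add_mem hu hv
  | single p r =>
    obtain ⟨i, q⟩ := p
    induction q using QuotientGroup.induction_on with
    | H x =>
      have h := Submodule.smul_mem _ r (cosetVec_mem_range i (x * (t ^ (i : ℕ))⁻¹))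
      simpa [cosetVec] using h

theorem finrank_eq :
    Module.finrank ℂ (((alternatingGroup (Fin 5) ⧸ (⊥ : Subgroup (alternatingGroup (Fin 5)))) ⊕
      (Σ _ : Fin 2, alternatingGroup (Fin 5) ⧸ V4)) →₀ ℂ) =
    Module.finrank ℂ ((Σ _ : Fin 3, alternatingGroup (Fin 5) ⧸ C2) →₀ ℂ) := by
  classical
  have := Fintype.ofFinite (alternatingGroup (Fin 5) ⧸ C2)
  have := Fintype.ofFinite (alternatingGroup (Fin 5) ⧸ V4)
  have := Fintype.ofFinite
    (alternatingGroup (Fin 5) ⧸ (⊥ : Subgroup (alternatingGroup (Fin 5))))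
  have h₁ := card_quotient_bot
  have h₂ := card_quotient_V4
  have h₃ := card_quotient_C2
  rw [Nat.card_eq_fintype_card] at h₁ h₂ h₃
  simp [h₁, h₂, h₃]

theorem mapDomain_smul_cosetVec (g : alternatingGroup (Fin 5)) (i : Fin 3)
    (h : alternatingGroup (Fin 5)) :
    Finsupp.mapDomain (g • ·) (cosetVec i h) = cosetVec i (g * h) := by
  rw [cosetVec, Finsupp.mapDomain_single, cosetVec, mul_assoc]
  rfl

theorem mapDomain_smul_sumV4 (g : alternatingGroup (Fin 5)) (i : Fin 3)
    (h : alternatingGroup (Fin 5)) :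
    Finsupp.mapDomain (g • ·) (sumV4 i h) = sumV4 i (g * h) := by
  simp only [sumV4, Finsupp.mapDomain_add, mapDomain_smul_cosetVec, mul_assoc]

theorem relationMap_mapDomain_smul (g : alternatingGroup (Fin 5))
    (v : ((alternatingGroup (Fin 5) ⧸ (⊥ : Subgroup (alternatingGroup (Fin 5)))) ⊕
      (Σ _ : Fin 2, alternatingGroup (Fin 5) ⧸ V4)) →₀ ℂ) :
    relationMap (Finsupp.mapDomain (g • ·) v) = Finsupp.mapDomain (g • ·) (relationMap v) := by
  induction v using Finsupp.induction_linear with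
  | zero => simp
  | add u v hu hv => simp only [Finsupp.mapDomain_add, map_add, hu, hv]
  | single p r =>
    simp only [relationMap, Finsupp.mapDomain_single, Finsupp.linearCombination_single,
      Finsupp.mapDomain_smul]
    congr 1
    obtain q | ⟨k, q⟩ := p
    · induction q using QuotientGroup.induction_on with
      | H x =>
        change ∑ i, cosetVec i (g * x) = Finsupp.mapDomain (g • ·) (∑ i, cosetVec i x)
        simp only [Finsupp.mapDomain_finsetSum, mapDomain_smul_cosetVec]
    · induction q using QuotientGroup.induction_on with
      | H x =>
        change sumV4 k.castSucc (g * x) - sumV4 k.succ (g * x) =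
          Finsupp.mapDomain (g • ·) (sumV4 k.castSucc x - sumV4 k.succ x)
        rw [← mapDomain_smul_sumV4, ← mapDomain_smul_sumV4]
        exact (map_sub (Finsupp.lmapDomain ℂ ℂ (g • ·)) _ _).symm

/-- The relation `ℂ[G/1] ⊕ ℂ[G/V₄]^{⊕2} ≅ ℂ[G/C₂]^{⊕3}` of complex permutation
representations of `G = A₅`, where `C₂ = ⟨(0 1)(2 3)⟩` and `V₄` is the Klein
four-subgroup. -/
theorem permRep_relation_A5 :
    ∃ e : (((alternatingGroup (Fin 5) ⧸ (⊥ : Subgroup (alternatingGroup (Fin 5)))) ⊕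
            (Σ _ : Fin 2, alternatingGroup (Fin 5) ⧸ V4)) →₀ ℂ) ≃ₗ[ℂ]
          ((Σ _ : Fin 3, alternatingGroup (Fin 5) ⧸ C2) →₀ ℂ),
      ∀ (g : alternatingGroup (Fin 5)) (v),
        e (Representation.ofMulAction ℂ (alternatingGroup (Fin 5))
            ((alternatingGroup (Fin 5) ⧸ (⊥ : Subgroup (alternatingGroup (Fin 5)))) ⊕
              (Σ _ : Fin 2, alternatingGroup (Fin 5) ⧸ V4)) g (MonoidAlgebra.ofCoeff v)).coeff =
          (Representation.ofMulAction ℂ (alternatingGroup (Fin 5))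
            (Σ _ : Fin 3, alternatingGroup (Fin 5) ⧸ C2) g (MonoidAlgebra.ofCoeff (e v))).coeff := by
  exact ⟨LinearEquiv.ofBijective relationMap
    ⟨(LinearMap.injective_iff_surjective_of_finrank_eq_finrank finrank_eq).mpr
      relationMap_surjective, relationMap_surjective⟩, relationMap_mapDomain_smul⟩

end Stmt13
end
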